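/- arXiv:0909.2811 — 2 statements merged into one kernel-verified Lean document; each statement's English description precedes it below -/
import Mathlib

section
/- The number S₂(H) of pairs (x₁, x₂) of positive integers with x₁, x₂ ≤ H such that x₁·x₂ is a perfect square satisfies S₂(H) = ζ(2)^{-1} H log H + O(H) as H → ∞. -/
open scoped Classical

open Filter

/-!
A product `x * y` of positive integers is a square exactly when `x = g * a ^ 2` and `y = g * b ^ 2`
with `a`, `b` coprime, and then `g = gcd x y`. For fixed `b` there are `φ b` choices of `a ≤ b` and
`⌊H / b ^ 2⌋` choices of `g`, so by symmetry
`S₂(H) = 2 * ∑ b ≤ √H, φ b * ⌊H / b ^ 2⌋ - ⌊H⌋`.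
Dropping the inner floors costs at most `∑ b ≤ √H, φ b ≤ H`. Finally `φ n / n ^ 2` is the Dirichlet
convolution of `μ d / d ^ 2` with `1 / e`. As `∑ e ≤ x / d, 1 / e = log x + O(1 + log d)` and
`∑ d, μ d / d ^ 2 = ζ(2)⁻¹`, this gives `∑ b ≤ x, φ b / b ^ 2 = ζ(2)⁻¹ * log x + O(1)`, applied with
`x = √H`, where `2 * log x = log H`.
-/

open Finset Asymptotics ArithmeticFunction
open scoped ArithmeticFunction.Moebius

lemma card_filter_product_self_add_card_filter_diag {α : Type*} [LinearOrder α] (s : Finset α)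
    (r : α → α → Prop) [DecidableRel r] [Std.Symm r] :
    #{p ∈ s ×ˢ s | r p.1 p.2} + #{a ∈ s | r a a} =
      2 * #{p ∈ s ×ˢ s | r p.1 p.2 ∧ p.1 ≤ p.2} := by
  have hunion : {p ∈ s ×ˢ s | r p.1 p.2 ∧ p.1 ≤ p.2} ∪ {p ∈ s ×ˢ s | r p.1 p.2 ∧ p.2 ≤ p.1} =
      {p ∈ s ×ˢ s | r p.1 p.2} := by
    ext p
    have := le_total p.1 p.2
    simp only [mem_union, mem_filter]
    tauto
  have hinter : #({p ∈ s ×ˢ s | r p.1 p.2 ∧ p.1 ≤ p.2} ∩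
      {p ∈ s ×ˢ s | r p.1 p.2 ∧ p.2 ≤ p.1}) = #{a ∈ s | r a a} := by
    refine card_nbij' Prod.fst (fun a ↦ (a, a)) ?_ ?_ ?_ ?_
    · rintro ⟨x, y⟩ h
      simp only [coe_inter, coe_filter, Set.mem_inter_iff, Set.mem_ofPred_eq, mem_product] at h ⊢
      obtain rfl : x = y := le_antisymm h.1.2.2 h.2.2.2
      exact ⟨h.1.1.1, h.1.2.1⟩
    · intro x
      simp +contextual
    · rintro ⟨x, y⟩
      simp +contextual [le_antisymm_iff]
    · intro x
      simp
  have hswap : #{p ∈ s ×ˢ s | r p.1 p.2 ∧ p.2 ≤ p.1} = #{p ∈ s ×ˢ s | r p.1 p.2 ∧ p.1 ≤ p.2} := by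
    refine card_nbij' Prod.swap Prod.swap ?_ ?_ ?_ ?_ <;> intro p <;>
      simp +contextual [Std.Symm.symm]
  rw [← hunion, ← hinter, card_union_add_card_inter, hswap, two_mul]

lemma isSquare_iff_exists_pos_eq_sq {n : ℕ} (hn : 0 < n) :
    IsSquare n ↔ ∃ m, 0 < m ∧ n = m ^ 2 := by
  rw [isSquare_iff_exists_sq]
  refine exists_congr fun m ↦ (and_iff_right_of_imp ?_).symm
  rintro rfl
  exact Nat.pos_of_ne_zero (by rintro rfl; simp at hn)

lemma isSquare_mul_iff_exists_coprime {x y : ℕ} :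
    IsSquare (x * y) ↔ ∃ g a b, a.Coprime b ∧ x = g * a ^ 2 ∧ y = g * b ^ 2 := by
  constructor
  · rintro ⟨m, hm⟩
    obtain ⟨u, v, huv, hu, hv⟩ := Nat.exists_coprime x y
    set g := x.gcd y
    rcases eq_or_ne g 0 with hg | hg
    · exact ⟨0, 1, 1, by simp_all⟩
    obtain ⟨k, rfl⟩ : g ∣ m := (Nat.pow_dvd_pow_iff two_ne_zero).1
      ⟨u * v, by rw [sq m, ← hm, hu, hv]; ring⟩
    have huvk : u * v = k ^ 2 := by
      apply Nat.eq_of_mul_eq_mul_left (pow_pos (Nat.pos_of_ne_zero hg) 2)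
      linear_combination hm - hu * y - hv * (u * g)
    have hunit : IsUnit (gcd u v) := Nat.isUnit_iff.2 huv
    obtain ⟨a, rfl⟩ := exists_eq_pow_of_mul_eq_pow hunit huvk
    obtain ⟨b, rfl⟩ := exists_eq_pow_of_mul_eq_pow (gcd_comm _ v ▸ hunit) (mul_comm _ v ▸ huvk)
    have hab : a.Coprime b := (Nat.coprime_pow_left_iff two_pos _ _).1
      ((Nat.coprime_pow_right_iff two_pos _ _).1 huv)
    exact ⟨g, a, b, hab, hu.trans (mul_comm _ _), hv.trans (mul_comm _ _)⟩
  · rintro ⟨g, a, b, -, rfl, rfl⟩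
    exact ⟨g * a * b, by ring⟩

lemma gcd_mul_sq_mul_sq {a b : ℕ} (g : ℕ) (h : a.Coprime b) :
    (g * a ^ 2).gcd (g * b ^ 2) = g := by
  rw [Nat.gcd_mul_left, h.pow 2 2, mul_one]

lemma eq_of_mul_sq_eq_mul_sq {g a b g' a' b' : ℕ} (hg : 0 < g) (hab : a.Coprime b)
    (hab' : a'.Coprime b') (hx : g * a ^ 2 = g' * a' ^ 2) (hy : g * b ^ 2 = g' * b' ^ 2) :
    g = g' ∧ a = a' ∧ b = b' := by
  obtain rfl : g = g' := by
    rw [← gcd_mul_sq_mul_sq g hab, ← gcd_mul_sq_mul_sq g' hab', hx, hy]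
  exact ⟨rfl, Nat.pow_left_injective two_ne_zero (Nat.eq_of_mul_eq_mul_left hg hx),
    Nat.pow_left_injective two_ne_zero (Nat.eq_of_mul_eq_mul_left hg hy)⟩

lemma card_filter_coprime_Icc_one (n : ℕ) : #{a ∈ Icc 1 n | n.Coprime a} = n.totient := by
  rw [← Nat.filter_coprime_Ico_eq_totient n 1, add_comm, Ico_add_one_right_eq_Icc]

lemma card_isSquare_mul_and_le (N : ℕ) :
    #{p ∈ Icc 1 N ×ˢ Icc 1 N | IsSquare (p.1 * p.2) ∧ p.1 ≤ p.2} =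
      ∑ b ∈ Icc 1 N.sqrt, b.totient * (N / b ^ 2) := by
  have hcard : ∑ b ∈ Icc 1 N.sqrt, b.totient * (N / b ^ 2) = #((Icc 1 N.sqrt).sigma
      fun b ↦ {a ∈ Icc 1 b | b.Coprime a} ×ˢ Icc 1 (N / b ^ 2)) := by
    simp [card_sigma, card_filter_coprime_Icc_one]
  rw [hcard]
  symm
  refine card_bij (fun t _ ↦ (t.2.2 * t.2.1 ^ 2, t.2.2 * t.1 ^ 2)) ?_ ?_ ?_
  · rintro ⟨b, a, g⟩ h
    simp only [mem_sigma, mem_product, mem_filter, mem_Icc] at h ⊢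
    obtain ⟨⟨hb, -⟩, ⟨⟨ha, hab⟩, -⟩, hg, hgb⟩ := h
    have hle : g * a ^ 2 ≤ g * b ^ 2 := by gcongr
    have hbN : g * b ^ 2 ≤ N := (Nat.le_div_iff_mul_le (by positivity)).1 hgb
    exact ⟨⟨⟨Nat.succ_le_of_lt (by positivity), hle.trans hbN⟩,
      Nat.succ_le_of_lt (by positivity), hbN⟩, ⟨g * a * b, by ring⟩, hle⟩
  · rintro ⟨b, a, g⟩ h ⟨b', a', g'⟩ h' heq
    simp only [mem_sigma, mem_product, mem_filter, mem_Icc] at h h'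
    obtain ⟨-, ⟨-, hab⟩, hg, -⟩ := h
    obtain ⟨-, ⟨-, hab'⟩, -⟩ := h'
    obtain ⟨hx, hy⟩ := Prod.mk.inj heq
    obtain ⟨rfl, rfl, rfl⟩ := eq_of_mul_sq_eq_mul_sq hg hab.symm hab'.symm hx hy
    rfl
  · rintro ⟨x, y⟩ h
    simp only [mem_product, mem_filter, mem_Icc] at h
    obtain ⟨⟨⟨hx, -⟩, hy, hyN⟩, hsq, hxy⟩ := h
    obtain ⟨g, a, b, hab, rfl, rfl⟩ := isSquare_mul_iff_exists_coprime.1 hsq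
    have hg : 0 < g := Nat.pos_of_mul_pos_right hx
    have ha : 0 < a := Nat.pos_of_ne_zero fun h ↦ by simp [h] at hx
    have hb : 0 < b := Nat.pos_of_ne_zero fun h ↦ by simp [h] at hy
    have hle : a ≤ b := (Nat.pow_le_pow_iff_left two_ne_zero).1 (Nat.le_of_mul_le_mul_left hxy hg)
    have hbN : b ^ 2 ≤ N := (Nat.le_mul_of_pos_left _ hg).trans hyN
    refine ⟨⟨b, a, g⟩, ?_, rfl⟩
    simp only [mem_sigma, mem_product, mem_filter, mem_Icc]
    exact ⟨⟨hb, Nat.le_sqrt'.2 hbN⟩, ⟨⟨ha, hle⟩, hab.symm⟩, hg,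
      (Nat.le_div_iff_mul_le (by positivity)).2 hyN⟩

lemma card_mul_eq_sq_add (N : ℕ) :
    #{p ∈ Icc 1 N ×ˢ Icc 1 N | ∃ m, 0 < m ∧ p.1 * p.2 = m ^ 2} + N =
      2 * ∑ b ∈ Icc 1 N.sqrt, b.totient * (N / b ^ 2) := by
  have hsymm : Std.Symm fun x y : ℕ ↦ IsSquare (x * y) := ⟨fun x y h ↦ mul_comm x y ▸ h⟩
  have hfilter : {p ∈ Icc 1 N ×ˢ Icc 1 N | ∃ m, 0 < m ∧ p.1 * p.2 = m ^ 2} =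
      {p ∈ Icc 1 N ×ˢ Icc 1 N | IsSquare (p.1 * p.2)} := by
    refine filter_congr fun p hp ↦ (isSquare_iff_exists_pos_eq_sq ?_).symm
    rw [mem_product, mem_Icc, mem_Icc] at hp
    exact Nat.mul_pos hp.1.1 hp.2.1
  rw [hfilter, ← card_isSquare_mul_and_le]
  simpa using card_filter_product_self_add_card_filter_diag (Icc 1 N) fun x y ↦ IsSquare (x * y)

/-- The arithmetic function `n ↦ 1 / n`, sending `0` to `0`. Its partial sums are the harmonic
numbers. -/
noncomputable def reciprocal : ArithmeticFunction ℝ := ⟨fun n ↦ (n : ℝ)⁻¹, by simp⟩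

lemma sum_reciprocal (N : ℕ) : ∑ n ∈ Icc 1 N, reciprocal n = harmonic N := by
  simp [harmonic_eq_sum_Icc, reciprocal]

lemma sum_mul_reciprocal (f : ArithmeticFunction ℝ) (N : ℕ) :
    ∑ n ∈ Icc 1 N, (f * reciprocal) n = ∑ d ∈ Icc 1 N, f d * harmonic (N / d) := by
  simp_rw [← sum_reciprocal]
  -- `Icc 1 N` and `Ioc 0 N` are definitionally equal.
  exact sum_Ioc_mul_eq_sum_sum f reciprocal N

lemma abs_harmonic_floor_div_sub_log_le {x y : ℝ} (hx : 1 ≤ x) (hy : 1 ≤ y) :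
    |(harmonic ⌊x / y⌋₊ : ℝ) - Real.log x| ≤ 1 + Real.log y := by
  have hlog : Real.log (x / y) = Real.log x - Real.log y :=
    Real.log_div (by positivity) (by positivity)
  have hlogy : 0 ≤ Real.log y := Real.log_nonneg hy
  rcases le_or_gt y x with hyx | hxy
  · have hlower := log_le_harmonic_floor (x / y) (by positivity)
    have hupper := harmonic_floor_le_one_add_log (x / y) ((one_le_div₀ (by positivity)).2 hyx)
    rw [abs_le]
    constructor <;> linarith
  · rw [Nat.floor_eq_zero.2 ((div_lt_one (by positivity)).2 hxy), harmonic_zero, Rat.cast_zero,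
      zero_sub, abs_neg, abs_of_nonneg (Real.log_nonneg hx)]
    linarith [Real.log_le_log (by positivity) hxy.le]

theorem isBigO_sum_mul_reciprocal_sub_mul_log {f : ArithmeticFunction ℝ} {A : ℝ}
    (hfA : HasSum f A) (hf : Summable fun d : ℕ ↦ |f d| * (1 + Real.log d)) :
    (fun x : ℝ ↦ ∑ n ∈ Icc 1 ⌊x⌋₊, (f * reciprocal) n - A * Real.log x) =O[atTop]
      fun _ ↦ (1 : ℝ) := by
  refine .of_bound (∑' d : ℕ, |f d| * (1 + Real.log d)) ?_
  filter_upwards [eventually_ge_atTop 1] with x hx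
  have hsum : HasSum (fun d : ℕ ↦ f d * harmonic ⌊x / d⌋₊)
      (∑ n ∈ Icc 1 ⌊x⌋₊, (f * reciprocal) n) := by
    simp_rw [sum_mul_reciprocal, ← Nat.floor_div_natCast]
    refine hasSum_sum_of_ne_finset_zero fun d hd ↦ ?_
    rcases Nat.eq_zero_or_pos d with rfl | hd0
    · simp
    · have hxd : ⌊x⌋₊ < d := by simpa [Nat.one_le_iff_ne_zero, hd0.ne'] using hd
      simp [Nat.floor_div_natCast, Nat.div_eq_of_lt hxd]
  have hdiff := hsum.sub (hfA.mul_right (Real.log x))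
  rw [← hdiff.tsum_eq, norm_one, mul_one]
  refine tsum_of_norm_bounded hf.hasSum fun d ↦ ?_
  rcases Nat.eq_zero_or_pos d with rfl | hd
  · simp
  · rw [← mul_sub, norm_mul, Real.norm_eq_abs, Real.norm_eq_abs]
    gcongr
    exact abs_harmonic_floor_div_sub_log_le hx (by exact_mod_cast hd)

/-- The arithmetic function `d ↦ μ d / d ^ 2`, the Dirichlet quotient of `n ↦ φ n / n ^ 2` by
`reciprocal`. -/
noncomputable def moebiusDivSq : ArithmeticFunction ℝ := ⟨fun d ↦ μ d / (d : ℝ) ^ 2, by simp⟩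

lemma moebiusDivSq_mul_reciprocal_apply (n : ℕ) :
    (moebiusDivSq * reciprocal) n = n.totient / (n : ℝ) ^ 2 := by
  rcases Nat.eq_zero_or_pos n with rfl | hn
  · simp
  have hinv : ∑ p ∈ n.divisorsAntidiagonal, (μ p.1 : ℝ) * p.2 = n.totient :=
    (sum_eq_iff_sum_mul_moebius_eq (f := fun m ↦ (m.totient : ℝ)) (g := Nat.cast)).1
      (fun m _ ↦ by exact_mod_cast m.sum_totient) n hn
  rw [← hinv, mul_apply, sum_div]
  refine sum_congr rfl fun p hp ↦ ?_
  obtain ⟨hpn, -⟩ := Nat.mem_divisorsAntidiagonal.1 hp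
  have hp2 : (p.2 : ℝ) ≠ 0 := by
    have := Nat.pos_of_mul_pos_left (hpn ▸ hn)
    positivity
  rw [← hpn, moebiusDivSq, reciprocal, coe_mk, coe_mk]
  push_cast
  field_simp

lemma LSeries_moebius_two : LSeries (fun n ↦ (μ n : ℂ)) 2 = 6 / Real.pi ^ 2 := by
  have hre : 1 < (2 : ℂ).re := by simp
  have h := LSeries_zeta_mul_Lseries_moebius hre
  rw [LSeries_zeta_eq_riemannZeta hre, riemannZeta_two] at h
  have hpi : (Real.pi : ℂ) ≠ 0 := by exact_mod_cast Real.pi_ne_zero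
  field_simp at h ⊢
  linear_combination h

lemma hasSum_moebiusDivSq : HasSum moebiusDivSq (6 / Real.pi ^ 2) := by
  have h := (LSeriesSummable_moebius_iff (s := 2)).2 (by simp) |>.LSeriesHasSum
  rw [LSeries_moebius_two] at h
  rw [← Complex.hasSum_ofReal]
  push_cast
  refine h.congr_fun fun d ↦ ?_
  rcases eq_or_ne d 0 with rfl | hd
  · simp
  · simp [LSeries.term_of_ne_zero hd, moebiusDivSq]

lemma one_add_log_le_two_mul_sqrt {x : ℝ} (hx : 0 < x) : 1 + Real.log x ≤ 2 * √x := by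
  have h := Real.log_le_sub_one_of_pos (Real.sqrt_pos.2 hx)
  rw [Real.log_sqrt hx.le] at h
  linarith

lemma summable_abs_moebiusDivSq_mul_one_add_log :
    Summable fun d : ℕ ↦ |moebiusDivSq d| * (1 + Real.log d) := by
  have hsum : Summable fun d : ℕ ↦ 2 * (1 / (d : ℝ) ^ (3 / 2 : ℝ)) :=
    (Real.summable_one_div_nat_rpow.2 (by norm_num)).mul_left 2
  refine hsum.of_nonneg_of_le (fun d ↦ ?_) fun d ↦ ?_
  · exact mul_nonneg (abs_nonneg _) (add_nonneg zero_le_one (Real.log_natCast_nonneg d))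
  rcases Nat.eq_zero_or_pos d with rfl | hd
  · simp
  have hd' : (0 : ℝ) < d := by exact_mod_cast hd
  have hmu : |(μ d : ℝ)| ≤ 1 := by exact_mod_cast abs_moebius_le_one (n := d)
  have hlog : 1 + Real.log d ≤ 2 * √d := one_add_log_le_two_mul_sqrt hd'
  have hpow : (d : ℝ) ^ 2 = (d : ℝ) ^ (3 / 2 : ℝ) * √d := by
    rw [Real.sqrt_eq_rpow, ← Real.rpow_add hd', ← Real.rpow_natCast]
    norm_num
  calc |moebiusDivSq d| * (1 + Real.log d)
      = |(μ d : ℝ)| / (d : ℝ) ^ 2 * (1 + Real.log d) := by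
        rw [moebiusDivSq, coe_mk, abs_div, abs_of_pos (pow_pos hd' 2)]
    _ ≤ 1 / (d : ℝ) ^ 2 * (2 * √d) := by gcongr
    _ = 2 * (1 / (d : ℝ) ^ (3 / 2 : ℝ)) := by
        rw [hpow]
        field_simp

theorem isBigO_sum_totient_div_sq_sub_log :
    (fun x : ℝ ↦ ∑ n ∈ Icc 1 ⌊x⌋₊, n.totient / (n : ℝ) ^ 2 - 6 / Real.pi ^ 2 * Real.log x)
      =O[atTop] fun _ ↦ (1 : ℝ) := by
  simpa only [moebiusDivSq_mul_reciprocal_apply] using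
    isBigO_sum_mul_reciprocal_sub_mul_log hasSum_moebiusDivSq
      summable_abs_moebiusDivSq_mul_one_add_log

lemma floor_sqrt_eq_sqrt_floor (x : ℝ) : ⌊√x⌋₊ = Nat.sqrt ⌊x⌋₊ := by
  refine eq_of_forall_le_iff fun n ↦ ?_
  rcases Nat.eq_zero_or_pos n with rfl | hn
  · simp
  · rw [Nat.le_floor_iff (Real.sqrt_nonneg x), Real.le_sqrt' (by exact_mod_cast hn), Nat.le_sqrt',
      Nat.le_floor_iff' (by positivity), Nat.cast_pow]

lemma sum_totient_le_sq (N : ℕ) : ∑ n ∈ Icc 1 N, n.totient ≤ N ^ 2 := by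
  have h : ∀ n ∈ Icc 1 N, n.totient ≤ N := fun n hn ↦ n.totient_le.trans (mem_Icc.1 hn).2
  simpa [sq] using sum_le_card_nsmul _ _ _ h

lemma isBigO_sum_totient_mul_floor_sub :
    (fun x : ℝ ↦ ((∑ n ∈ Icc 1 ⌊√x⌋₊, n.totient * (⌊x⌋₊ / n ^ 2) : ℕ) : ℝ) -
      x * ∑ n ∈ Icc 1 ⌊√x⌋₊, n.totient / (n : ℝ) ^ 2) =O[atTop] fun x ↦ x := by
  refine .of_bound 1 ?_
  filter_upwards [eventually_ge_atTop 0] with x hx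
  have hterm (n : ℕ) : |(n.totient * (⌊x⌋₊ / n ^ 2 : ℕ) : ℝ) - x * (n.totient / (n : ℝ) ^ 2)| ≤
      n.totient := by
    have hfloor : |((⌊x⌋₊ / n ^ 2 : ℕ) : ℝ) - x / (n : ℝ) ^ 2| ≤ 1 := by
      rw [← Nat.floor_div_natCast, Nat.cast_pow]
      exact Nat.abs_floor_sub_le (by positivity)
    calc _ = (n.totient : ℝ) * |((⌊x⌋₊ / n ^ 2 : ℕ) : ℝ) - x / (n : ℝ) ^ 2| := by
          rw [← Nat.abs_cast n.totient, ← abs_mul, Nat.abs_cast]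
          ring_nf
      _ ≤ n.totient := mul_le_of_le_one_right (by positivity) hfloor
  have hsqrt : ((⌊√x⌋₊ ^ 2 : ℕ) : ℝ) ≤ x := by
    rw [floor_sqrt_eq_sqrt_floor, ← Nat.le_floor_iff hx]
    exact Nat.sqrt_le' _
  rw [Real.norm_eq_abs, Real.norm_eq_abs, abs_of_nonneg hx, one_mul, mul_sum]
  push_cast
  rw [← sum_sub_distrib]
  calc _ ≤ ∑ n ∈ Icc 1 ⌊√x⌋₊, (n.totient : ℝ) :=
        (abs_sum_le_sum_abs _ _).trans (sum_le_sum fun n _ ↦ hterm n)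
    _ ≤ ((⌊√x⌋₊ ^ 2 : ℕ) : ℝ) := by exact_mod_cast sum_totient_le_sq _
    _ ≤ x := hsqrt

theorem pairs_square_asymptotic :
    (fun H : ℝ =>
        (((Finset.Icc 1 ⌊H⌋₊ ×ˢ Finset.Icc 1 ⌊H⌋₊).filter
            (fun p : ℕ × ℕ => ∃ m : ℕ, 0 < m ∧ p.1 * p.2 = m ^ 2)).card : ℝ)
          - (6 / Real.pi ^ 2) * H * Real.log H)
      =O[atTop] fun H : ℝ => H := by
  have hfloor := isBigO_sum_totient_mul_floor_sub.const_mul_left 2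
  have hmain := ((isBigO_refl (fun H : ℝ ↦ H) atTop).mul
    (isBigO_sum_totient_div_sq_sub_log.comp_tendsto Real.tendsto_sqrt_atTop)).const_mul_left 2
  simp only [Function.comp_apply, mul_one] at hmain
  have hdiag : (fun H : ℝ ↦ (⌊H⌋₊ : ℝ)) =O[atTop] fun H ↦ H := isEquivalent_nat_floor.isBigO
  refine ((hfloor.add hmain).sub hdiag).congr' ?_ .rfl
  filter_upwards [eventually_ge_atTop 0] with H hH
  have hcount := congrArg (Nat.cast : ℕ → ℝ) (card_mul_eq_sq_add ⌊H⌋₊)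
  rw [← floor_sqrt_eq_sqrt_floor] at hcount
  push_cast at hcount ⊢
  rw [Real.log_sqrt hH]
  linear_combination -hcount
end

section
/- For k ≥ 2, the number S_k(H) of pairs of positive integers x₁, x₂ ≤ H with x₁·x₂ a perfect k-th power satisfies S_k(H) = c_k H^{2/k} (log H)^{k−1} + O(H^{2/k} (log H)^{k−2}), where c_k = (P_k/((k−1)!)²)·(1 + k^{−(k−2)} Σ_{k/2 < m ≤ k−1} (−1)^{k−m} (2m−k)^{k−1} C(k−1,m)/(k−m)) and P_k = Π_p (1 − 1/p)^{k−1}(1 + (k−1)/p). -/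
/-! Every pair of positive integers whose product is a `k`-th power is uniquely
`(u ^ k * ∏ aⱼ ^ j, v ^ k * ∏ aⱼ ^ (k - j))` with `a₁ ⋯ a_{k-1}` squarefree. Summing over `u`
and `v` first, the number of pairs is close to `H ^ (2 / k) * ∑ 1 / (a₁ ⋯ a_{k-1})`, the sum
running over the squarefree tuples for which both products are at most `H`.

In the coordinates `tⱼ = log aⱼ` the sum over all tuples approximates the volume of the orthant cut
off by `∑ j tⱼ ≤ log H` and `∑ (k - j) tⱼ ≤ log H`. Imposing squarefreeness at one prime at a
time writes the sum as a finite combination of sums over translates of the cut orthant; this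
multiplies the main term by the Euler factor of that prime, and the errors form a convergent
product.

For the volume, let the two constraints have weights `cⱼ` and `κ - cⱼ` and bounds `x` and `y`.
Integrating out one coordinate at a time shows that the volume of the cut orthant in `n` dimensions
is, up to a constant factor, the divided difference of `m ↦ max 0 (m * (x + y) - κ * x) ^ n` at
the nodes `0`, `κ` and `cⱼ`. For `cⱼ = j` and `κ = k` the nodes are `0, …, k`, which gives the
binomial sum. -/

open Filter
open scoped Classical

namespace PowerProduct

open MeasureTheory

section CutOrthant

/-- The points of the closed positive orthant cut off by the half-spaces `α ⬝ᵥ t ≤ x` and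
`β ⬝ᵥ t ≤ y`. -/
def cutOrthant {n : ℕ} (α β : Fin n → ℝ) (x y : ℝ) : Set (Fin n → ℝ) :=
  {t | 0 ≤ t ∧ α ⬝ᵥ t ≤ x ∧ β ⬝ᵥ t ≤ y}

/-- The Lebesgue measure of `cutOrthant α β x y` as a real number, which is its volume once the
weights `α` are positive, so that the set is bounded. -/
noncomputable def cutVolume {n : ℕ} (α β : Fin n → ℝ) (x y : ℝ) : ℝ :=
  volume.real (cutOrthant α β x y)

variable {n : ℕ} {α β : Fin n → ℝ} {x y x' y' : ℝ}

theorem cutOrthant_subset (hx : x ≤ x') (hy : y ≤ y') :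
    cutOrthant α β x y ⊆ cutOrthant α β x' y' :=
  fun _ ht => ⟨ht.1, ht.2.1.trans hx, ht.2.2.trans hy⟩

theorem isClosed_cutOrthant : IsClosed (cutOrthant α β x y) := by
  have hα : Continuous fun t => α ⬝ᵥ t := by unfold dotProduct; fun_prop
  have hβ : Continuous fun t => β ⬝ᵥ t := by unfold dotProduct; fun_prop
  exact isClosed_Ici.inter
    ((isClosed_le hα continuous_const).inter (isClosed_le hβ continuous_const))

theorem apply_le_dotProduct {t : Fin n → ℝ} (hα : 1 ≤ α) (ht : 0 ≤ t) (j : Fin n) :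
    t j ≤ α ⬝ᵥ t :=
  (le_mul_of_one_le_left (ht j) (hα j)).trans
    (Finset.single_le_sum (f := fun j => α j * t j)
      (fun i _ => mul_nonneg (zero_le_one.trans (hα i)) (ht i)) (Finset.mem_univ j))

theorem cutOrthant_subset_Icc (hα : 1 ≤ α) {L : ℝ} (hx : x ≤ L) :
    cutOrthant α β x y ⊆ Set.Icc 0 (fun _ => L) :=
  fun _ ht => ⟨ht.1, fun j => (apply_le_dotProduct hα ht.1 j).trans (ht.2.1.trans hx)⟩

theorem cutOrthant_eq_empty (hα : 1 ≤ α) (hβ : 1 ≤ β) (hxy : x < 0 ∨ y < 0) :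
    cutOrthant α β x y = ∅ := by
  have dot_nonneg {γ t : Fin n → ℝ} (hγ : 1 ≤ γ) (ht : 0 ≤ t) : 0 ≤ γ ⬝ᵥ t :=
    dotProduct_nonneg_of_nonneg (zero_le_one.trans hγ) ht
  refine Set.eq_empty_of_forall_notMem fun t ⟨ht, hαt, hβt⟩ => ?_
  rcases hxy with h | h
  · exact h.not_ge ((dot_nonneg hα ht).trans hαt)
  · exact h.not_ge ((dot_nonneg hβ ht).trans hβt)

theorem volume_cutOrthant_lt_top (hα : 1 ≤ α) : volume (cutOrthant α β x y) < ⊤ :=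
  (measure_mono (cutOrthant_subset_Icc hα le_rfl)).trans_lt isCompact_Icc.measure_lt_top

theorem cutVolume_nonneg : 0 ≤ cutVolume α β x y := measureReal_nonneg

theorem cutVolume_eq_zero (hα : 1 ≤ α) (hβ : 1 ≤ β) (hxy : x < 0 ∨ y < 0) :
    cutVolume α β x y = 0 := by
  rw [cutVolume, cutOrthant_eq_empty hα hβ hxy, measureReal_empty]

theorem cutVolume_mono (hα : 1 ≤ α) (hx : x ≤ x') (hy : y ≤ y') :
    cutVolume α β x y ≤ cutVolume α β x' y' :=
  measureReal_mono (cutOrthant_subset hx hy) (volume_cutOrthant_lt_top hα).ne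

theorem cutVolume_le_pow (hα : 1 ≤ α) {L : ℝ} (hL : 0 ≤ L) (hx : x ≤ L) :
    cutVolume α β x y ≤ L ^ n := by
  calc cutVolume α β x y
      ≤ volume.real (Set.Icc (0 : Fin n → ℝ) (fun _ => L)) :=
        measureReal_mono (cutOrthant_subset_Icc hα hx) isCompact_Icc.measure_lt_top.ne
    _ = L ^ n := by
        rw [measureReal_def, Real.volume_Icc_pi_toReal (a := (0 : Fin n → ℝ)) fun _ => hL]
        simp

theorem cutVolume_fin_zero (α β : Fin 0 → ℝ) (x y : ℝ) :
    cutVolume α β x y = if 0 ≤ x ∧ 0 ≤ y then 1 else 0 := by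
  have : cutOrthant α β x y = if 0 ≤ x ∧ 0 ≤ y then {0} else ∅ := by
    ext t
    split_ifs with h <;> simp [cutOrthant, h, Subsingleton.elim t 0]
  rw [cutVolume, this, measureReal_def, volume_pi, Measure.pi_of_empty _ 0]
  split_ifs <;> simp

end CutOrthant

section Slices

variable {n : ℕ} {α β : Fin (n + 1) → ℝ} {x y : ℝ}

theorem one_le_tail {α : Fin (n + 1) → ℝ} (hα : 1 ≤ α) : 1 ≤ Fin.tail α :=
  fun j => hα j.succ

theorem cons_mem_cutOrthant {t : ℝ} {s : Fin n → ℝ} :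
    (Fin.cons t s : Fin (n + 1) → ℝ) ∈ cutOrthant α β x y ↔
      0 ≤ t ∧ s ∈ cutOrthant (Fin.tail α) (Fin.tail β) (x - α 0 * t) (y - β 0 * t) := by
  simp only [cutOrthant, Set.mem_ofPred_eq, dotProduct, Pi.le_def, Fin.forall_fin_succ,
    Fin.sum_univ_succ, Fin.cons_zero, Fin.cons_succ, Fin.tail, le_sub_iff_add_le',
    Pi.zero_apply, and_assoc]

/-- The volume of the slice of `cutOrthant α β x y` at first coordinate `t`. -/
noncomputable def sliceVolume (α β : Fin (n + 1) → ℝ) (x y t : ℝ) : ℝ :=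
  cutVolume (Fin.tail α) (Fin.tail β) (x - α 0 * t) (y - β 0 * t)

theorem sliceVolume_nonneg (t : ℝ) : 0 ≤ sliceVolume α β x y t := cutVolume_nonneg

theorem antitone_sliceVolume (hα : 1 ≤ α) (hβ : 1 ≤ β) : Antitone (sliceVolume α β x y) := by
  intro s t hst
  have hα₀ : 0 ≤ α 0 := zero_le_one.trans (hα 0)
  have hβ₀ : 0 ≤ β 0 := zero_le_one.trans (hβ 0)
  apply cutVolume_mono (one_le_tail hα) <;> gcongr

theorem sliceVolume_eq_zero (hα : 1 ≤ α) (hβ : 1 ≤ β) {t : ℝ} (ht : x < α 0 * t ∨ y < β 0 * t) :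
    sliceVolume α β x y t = 0 :=
  cutVolume_eq_zero (one_le_tail hα) (one_le_tail hβ) (by simpa only [sub_neg] using ht)

theorem cutVolume_eq_setIntegral (hα : 1 ≤ α) :
    cutVolume α β x y = ∫ t in Set.Ici (0 : ℝ), sliceVolume α β x y t := by
  let e := (MeasurableEquiv.piFinSuccAbove (fun _ : Fin (n + 1) => ℝ) 0).symm
  have he : MeasurePreserving e :=
    (volume_preserving_piFinSuccAbove (fun _ : Fin (n + 1) => ℝ) 0).symm
  have e_apply (t : ℝ) (s : Fin n → ℝ) : e (t, s) = Fin.cons t s := Fin.insertNth_zero' t s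
  have measurable_preimage : MeasurableSet (e ⁻¹' cutOrthant α β x y) :=
    e.measurable isClosed_cutOrthant.measurableSet
  have volume_preimage : volume (e ⁻¹' cutOrthant α β x y) = volume (cutOrthant α β x y) :=
    he.measure_preimage isClosed_cutOrthant.measurableSet.nullMeasurableSet
  have slice (t : ℝ) : volume.real (Prod.mk t ⁻¹' (e ⁻¹' cutOrthant α β x y)) =
      (Set.Ici (0 : ℝ)).indicator (sliceVolume α β x y) t := by
    by_cases ht : 0 ≤ t <;>
      simp [Set.preimage, e_apply, cons_mem_cutOrthant, sliceVolume, cutVolume, ht]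
  have finite : (volume.prod volume) (e ⁻¹' cutOrthant α β x y) ≠ ⊤ := by
    rw [← Measure.volume_eq_prod, volume_preimage]
    exact (volume_cutOrthant_lt_top hα).ne
  rw [cutVolume, measureReal_def, ← volume_preimage, Measure.volume_eq_prod,
    Measure.prod_apply measurable_preimage, ← integral_toReal
      (measurable_measure_prodMk_left measurable_preimage).aemeasurable
      (Measure.ae_measure_lt_top measurable_preimage finite),
    ← integral_indicator measurableSet_Ici]
  exact integral_congr_ae (ae_of_all _ slice)

theorem cutVolume_eq_intervalIntegral (hα : 1 ≤ α) (hβ : 1 ≤ β) {M : ℝ} (hM₀ : 0 ≤ M)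
    (hM : ∀ t, M < t → x < α 0 * t ∨ y < β 0 * t) :
    cutVolume α β x y = ∫ t in (0 : ℝ)..M, sliceVolume α β x y t := by
  rw [cutVolume_eq_setIntegral hα, intervalIntegral.integral_of_le hM₀,
    integral_Ici_eq_integral_Ioi]
  refine setIntegral_eq_of_subset_of_forall_sdiff_eq_zero measurableSet_Ioi
    Set.Ioc_subset_Ioi_self fun t ht => sliceVolume_eq_zero hα hβ (hM t ?_)
  exact not_le.1 fun h => ht.2 ⟨ht.1, h⟩

theorem cutVolume_eq_intervalIntegral_of_le (hα : 1 ≤ α) (hβ : 1 ≤ β) {M : ℝ} (hM : 0 ≤ M)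
    (hx : x ≤ M) : cutVolume α β x y = ∫ t in (0 : ℝ)..M, sliceVolume α β x y t :=
  cutVolume_eq_intervalIntegral hα hβ hM fun _ ht => .inl <|
    (hx.trans_lt ht).trans_le (le_mul_of_one_le_left (hM.trans ht.le) (hα 0))

theorem cutVolume_fin_one {α β : Fin 1 → ℝ} (hα : 1 ≤ α) (hβ : 1 ≤ β) :
    cutVolume α β x y = max 0 (min (x / α 0) (y / β 0)) := by
  have hα₀ : 0 < α 0 := zero_lt_one.trans_le (hα 0)
  have hβ₀ : 0 < β 0 := zero_lt_one.trans_le (hβ 0)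
  have slice (t : ℝ) : sliceVolume α β x y t =
      (Set.Iic (min (x / α 0) (y / β 0))).indicator (fun _ => 1) t := by
    rw [sliceVolume, cutVolume_fin_zero, Set.indicator_apply]
    simp only [sub_nonneg, Set.mem_Iic, le_min_iff, le_div_iff₀' hα₀, le_div_iff₀' hβ₀]
  rw [cutVolume_eq_setIntegral hα]
  simp only [slice]
  rw [setIntegral_indicator measurableSet_Iic, Set.Ici_inter_Iic, setIntegral_const,
    Real.volume_real_Icc, smul_eq_mul, mul_one, sub_zero, max_comm]

theorem cutVolume_sub_le (hα : 1 ≤ α) (hβ : 1 ≤ β) {s s' L : ℝ} (hL : 0 ≤ L) (hx : x ≤ L)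
    (hs : 0 ≤ s) (hs' : 0 ≤ s') :
    cutVolume α β x y - cutVolume α β (x - s) (y - s') ≤ (s + s') * (1 + L) ^ n := by
  induction n generalizing x y with
  | zero =>
    have div_le {u v a : ℝ} (ha : 1 ≤ a) (hv : 0 ≤ v) : u / a ≤ (u - v) / a + v := by
      rw [sub_div, sub_add_eq_add_sub, add_sub_assoc]
      exact le_add_of_nonneg_right (sub_nonneg.2 (div_le_self hv ha))
    have hx_le := div_le (u := x) (hα 0) hs
    have hy_le := div_le (u := y) (hβ 0) hs'
    rw [cutVolume_fin_one hα hβ, cutVolume_fin_one hα hβ, pow_zero, mul_one, sub_le_iff_le_add']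
    have min_le : min (x / α 0) (y / β 0) ≤
        min ((x - s) / α 0) ((y - s') / β 0) + (s + s') := by
      rw [← min_add_add_right]
      exact min_le_min (by linarith) (by linarith)
    exact max_le (add_nonneg (le_max_left _ _) (add_nonneg hs hs'))
      (min_le.trans (add_le_add_left (le_max_right _ _) _))
  | succ n ih =>
    have integrable (x y : ℝ) : IntervalIntegrable (sliceVolume α β x y) volume 0 L :=
      (antitone_sliceVolume hα hβ).intervalIntegrable
    have slice_le (t : ℝ) (ht : t ∈ Set.Icc 0 L) :
        sliceVolume α β x y t - sliceVolume α β (x - s) (y - s') t ≤ (s + s') * (1 + L) ^ n := by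
      have hxt : x - α 0 * t ≤ L :=
        (sub_le_self x (mul_nonneg (zero_le_one.trans (hα 0)) ht.1)).trans hx
      simpa only [sliceVolume, sub_right_comm] using
        ih (one_le_tail hα) (one_le_tail hβ) (y := y - β 0 * t) hxt
    rw [cutVolume_eq_intervalIntegral_of_le hα hβ hL hx,
      cutVolume_eq_intervalIntegral_of_le hα hβ hL (show x - s ≤ L by linarith),
      ← intervalIntegral.integral_sub (integrable _ _) (integrable _ _)]
    calc ∫ t in (0 : ℝ)..L, (sliceVolume α β x y t - sliceVolume α β (x - s) (y - s') t)
        ≤ ∫ t in (0 : ℝ)..L, (s + s') * (1 + L) ^ n :=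
          intervalIntegral.integral_mono_on hL ((integrable _ _).sub (integrable _ _))
            intervalIntegrable_const slice_le
      _ = (s + s') * (1 + L) ^ n * L := by
          rw [intervalIntegral.integral_const, smul_eq_mul, sub_zero, mul_comm]
      _ ≤ (s + s') * (1 + L) ^ n * (1 + L) := by gcongr; linarith
      _ = (s + s') * (1 + L) ^ (n + 1) := by ring

end Slices

section TruncatedPower

theorem integral_max_zero_pow {n : ℕ} (hn : n ≠ 0) (b : ℝ) :
    ∫ u in (0 : ℝ)..b, max 0 u ^ n = max 0 b ^ (n + 1) / (n + 1) := by
  rcases le_total 0 b with hb | hb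
  · have (u : ℝ) (hu : u ∈ Set.uIcc 0 b) : max 0 u ^ n = u ^ n := by
      rw [Set.uIcc_of_le hb] at hu
      rw [max_eq_right hu.1]
    rw [intervalIntegral.integral_congr this, integral_pow, max_eq_right hb]
    simp
  · have (u : ℝ) (hu : u ∈ Set.uIcc 0 b) : max 0 u ^ n = 0 := by
      rw [Set.uIcc_of_ge hb] at hu
      rw [max_eq_left hu.2, zero_pow hn]
    rw [intervalIntegral.integral_congr this, max_eq_left hb]
    simp

theorem integral_max_zero_sub_mul_pow {n : ℕ} (hn : n ≠ 0) {δ : ℝ} (hδ : δ ≠ 0) (u T : ℝ) :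
    ∫ t in (0 : ℝ)..T, max 0 (u - δ * t) ^ n =
      (max 0 u ^ (n + 1) - max 0 (u - δ * T) ^ (n + 1)) / ((n + 1) * δ) := by
  have integrable (b : ℝ) :
      IntervalIntegrable (fun v : ℝ => max 0 v ^ n) volume 0 b :=
    Continuous.intervalIntegrable (by fun_prop) _ _
  rw [intervalIntegral.integral_comp_sub_mul (fun v : ℝ => max 0 v ^ n) hδ, mul_zero, sub_zero,
    ← intervalIntegral.integral_interval_sub_left (integrable u) (integrable (u - δ * T)),
    integral_max_zero_pow hn, integral_max_zero_pow hn, smul_eq_mul]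
  field_simp

end TruncatedPower

section DividedDifference

open Lagrange

variable {F : Type*} [Field F]

/-- The divided difference of `f` at the nodes `s`. -/
noncomputable def dividedDiff (s : Finset F) (f : F → F) : F :=
  ∑ m ∈ s, nodalWeight s id m * f m

theorem nodalWeight_insert {s : Finset F} {a m : F} (ha : a ∉ s) (hm : m ∈ s) :
    nodalWeight (insert a s) id m = nodalWeight s id m / (m - a) := by
  have hne : a ≠ m := fun h => ha (h ▸ hm)
  rw [nodalWeight, Finset.erase_insert_of_ne hne, Finset.prod_insert (by simp [ha]), nodalWeight,
    div_eq_inv_mul]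
  rfl

theorem sum_nodalWeight_eq_zero {s : Finset F} (hs : 1 < s.card) :
    ∑ m ∈ s, nodalWeight s id m = 0 := by
  have h := coeff_eq_sum (s := s) (v := id) (P := (1 : Polynomial F)) Function.injective_id.injOn
    (by rw [Polynomial.degree_one]; exact_mod_cast zero_lt_one.trans hs)
  rw [Polynomial.coeff_one, if_neg (by omega)] at h
  simpa [nodalWeight, eq_comm] using h

theorem dividedDiff_insert {s : Finset F} {a : F} (ha : a ∉ s) (hs : s.Nonempty) (f : F → F) :
    dividedDiff (insert a s) f = ∑ m ∈ s, nodalWeight s id m * ((f m - f a) / (m - a)) := by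
  have card_insert : 1 < (insert a s).card := by
    rw [Finset.card_insert_of_notMem ha]
    exact Nat.lt_add_of_pos_left hs.card_pos
  calc dividedDiff (insert a s) f
      = ∑ m ∈ insert a s, nodalWeight (insert a s) id m * (f m - f a) := by
        simp only [dividedDiff, mul_sub, Finset.sum_sub_distrib, ← Finset.sum_mul,
          sum_nodalWeight_eq_zero card_insert, zero_mul, sub_zero]
    _ = ∑ m ∈ s, nodalWeight (insert a s) id m * (f m - f a) := by
        rw [Finset.sum_insert ha, sub_self, mul_zero, zero_add]
    _ = ∑ m ∈ s, nodalWeight s id m * ((f m - f a) / (m - a)) :=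
        Finset.sum_congr rfl fun m hm => by
          rw [nodalWeight_insert ha hm, div_mul_eq_mul_div, mul_div_assoc]

theorem dividedDiff_triple {a b c : F} (hab : a ≠ b) (hac : a ≠ c) (hbc : b ≠ c) (f : F → F) :
    dividedDiff {a, b, c} f = f a / ((a - b) * (a - c)) + f b / ((b - a) * (b - c)) +
      f c / ((c - a) * (c - b)) := by
  have nodalWeight_eq {s : Finset F} {m p q : F} (hs : s.erase m = {p, q}) (hpq : p ≠ q) :
      nodalWeight s id m = ((m - p) * (m - q))⁻¹ := by
    rw [nodalWeight, hs, Finset.prod_pair hpq, mul_inv]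
    rfl
  rw [dividedDiff, Finset.sum_insert (by simp [hab, hac]), Finset.sum_pair hbc,
    nodalWeight_eq (p := b) (q := c) (by grind) hbc,
    nodalWeight_eq (p := a) (q := c) (by grind) hac,
    nodalWeight_eq (p := a) (q := b) (by grind) hab]
  ring

theorem prod_range_erase_sub {N m : ℕ} (hm : m ≤ N) :
    ∏ j ∈ (Finset.range (N + 1)).erase m, ((m : F) - j) =
      (-1) ^ (N - m) * m.factorial * (N - m).factorial := by
  obtain ⟨d, rfl⟩ := Nat.exists_eq_add_of_le hm
  have split : (Finset.range (m + d + 1)).erase m =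
      (Finset.range m).disjUnion (Finset.Ico (m + 1) (m + d + 1))
        (Finset.disjoint_left.2 fun j => by
          simp only [Finset.mem_range, Finset.mem_Ico]; omega) := by
    ext j
    simp only [Finset.mem_erase, Finset.mem_disjUnion, Finset.mem_range, Finset.mem_Ico]
    omega
  have below : ∏ j ∈ Finset.range m, ((m : F) - j) = m.factorial := by
    rw [← Finset.prod_range_reflect, ← Finset.prod_range_add_one_eq_factorial, Nat.cast_prod]
    refine Finset.prod_congr rfl fun j hj => ?_
    rw [← Nat.cast_sub (by omega)]
    congr 1
    have := Finset.mem_range.1 hj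
    omega
  have above : ∏ j ∈ Finset.Ico (m + 1) (m + d + 1), ((m : F) - j) = (-1) ^ d * d.factorial := by
    rw [Finset.prod_Ico_eq_prod_range, show m + d + 1 - (m + 1) = d by omega,
      ← Finset.prod_range_add_one_eq_factorial, Nat.cast_prod, ← Finset.card_range d,
      ← Finset.prod_const, Finset.card_range, ← Finset.prod_mul_distrib]
    refine Finset.prod_congr rfl fun j _ => ?_
    push_cast
    ring
  rw [split, Finset.prod_disjUnion, below, above, Nat.add_sub_cancel_left]
  ring

theorem dividedDiff_image_natCast [CharZero F] (N : ℕ) (f : F → F) :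
    dividedDiff ((Finset.range (N + 1)).image (Nat.cast : ℕ → F)) f =
      ∑ m ∈ Finset.range (N + 1), (-1) ^ (N - m) * f m / (m.factorial * (N - m).factorial) := by
  rw [dividedDiff, Finset.sum_image Nat.cast_injective.injOn]
  refine Finset.sum_congr rfl fun m hm => ?_
  rw [nodalWeight, ← Finset.image_erase Nat.cast_injective,
    Finset.prod_image Nat.cast_injective.injOn, Finset.prod_inv_distrib]
  simp only [id]
  rw [prod_range_erase_sub (Finset.mem_range_succ_iff.1 hm), mul_inv, mul_inv, ← inv_pow,
    inv_neg_one]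
  ring

end DividedDifference

section DiagonalVolume

variable {n : ℕ} {c : Fin (n + 1) → ℝ} {κ x y : ℝ}

/-- The numbers `0` and `κ` together with the weights `c`. -/
noncomputable def nodes (κ : ℝ) (c : Fin n → ℝ) : Finset ℝ :=
  insert 0 (insert κ (Finset.univ.image c))

theorem nodes_succ (κ : ℝ) (c : Fin (n + 1) → ℝ) :
    nodes κ c = insert (c 0) (nodes κ (Fin.tail c)) := by
  ext m
  simp only [nodes, Finset.mem_insert, Finset.mem_image, Finset.mem_univ, true_and,
    Fin.exists_fin_succ, Fin.tail]
  grind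

theorem apply_zero_notMem_nodes_tail (hc : 1 ≤ c) (hcκ : ∀ j, 1 ≤ κ - c j)
    (hinj : Function.Injective c) : c 0 ∉ nodes κ (Fin.tail c) := by
  have hc₀ : 1 ≤ c 0 := hc 0
  simp only [nodes, Finset.mem_insert, Finset.mem_image, Finset.mem_univ, true_and, Fin.tail,
    hinj.eq_iff, Fin.succ_ne_zero, exists_false, or_false, not_or]
  constructor <;> linarith [hcκ 0]

theorem max_zero_min_eq {X Y : ℝ} (h : 0 ≤ X ∨ 0 ≤ Y) :
    max 0 (min X Y) = max 0 (-X) - max 0 (Y - X) + max 0 Y := by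
  grind

theorem cutVolume_complementary_fin_one {c : Fin 1 → ℝ} (hc : 1 ≤ c) (hcκ : ∀ j, 1 ≤ κ - c j)
    (hxy : 0 ≤ x + y) :
    cutVolume c (fun j => κ - c j) x y =
      dividedDiff (nodes κ c) fun m => max 0 (m * (x + y) - κ * x) := by
  have hc₀ : 1 ≤ c 0 := hc 0
  have hd₀ : 1 ≤ κ - c 0 := hcκ 0
  obtain ⟨X, rfl⟩ : ∃ X, x = c 0 * X := ⟨x / c 0, by field_simp⟩
  obtain ⟨Y, rfl⟩ : ∃ Y, y = (κ - c 0) * Y := ⟨y / (κ - c 0), by field_simp⟩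
  have h_nonneg : 0 ≤ X ∨ 0 ≤ Y := by
    by_contra! h
    nlinarith
  have nodes_eq : nodes κ c = {0, c 0, κ} := by
    rw [nodes_succ, nodes, Finset.univ_eq_empty, Finset.image_empty, insert_empty_eq,
      Finset.insert_comm]
  have at_zero : max 0 (0 * (c 0 * X + (κ - c 0) * Y) - κ * (c 0 * X)) =
      κ * c 0 * max 0 (-X) := by
    rw [mul_max_of_nonneg _ _ (by nlinarith), mul_zero]
    ring_nf
  have at_weight : max 0 (c 0 * (c 0 * X + (κ - c 0) * Y) - κ * (c 0 * X)) =
      c 0 * (κ - c 0) * max 0 (Y - X) := by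
    rw [mul_max_of_nonneg _ _ (by nlinarith), mul_zero]
    ring_nf
  have at_total : max 0 (κ * (c 0 * X + (κ - c 0) * Y) - κ * (c 0 * X)) =
      κ * (κ - c 0) * max 0 Y := by
    rw [mul_max_of_nonneg _ _ (by nlinarith), mul_zero]
    ring_nf
  have hκ₀ : κ ≠ 0 := by linarith
  have hκ₁ : κ - c 0 ≠ 0 := by linarith
  have hκ₂ : c 0 - κ ≠ 0 := by linarith
  have hκ₃ : c 0 ≠ 0 := by linarith
  rw [cutVolume_fin_one hc hcκ, mul_div_cancel_left₀ X (by linarith),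
    mul_div_cancel_left₀ Y (by linarith), max_zero_min_eq h_nonneg, nodes_eq,
    dividedDiff_triple (by linarith) (by linarith) (by linarith), at_zero, at_weight, at_total]
  field_simp
  ring

theorem integral_dividedDiff {s : Finset ℝ} {a : ℝ} (ha : a ∉ s) (hs : s.Nonempty) (hκ : 0 < κ) :
    ∫ t in (0 : ℝ)..(x + y) / κ,
        dividedDiff s (fun m => max 0 ((m * (x + y) - κ * x) - κ * (m - a) * t) ^ (n + 1)) =
      (κ * (n + 2))⁻¹ *
        dividedDiff (insert a s) (fun m => max 0 (m * (x + y) - κ * x) ^ (n + 2)) := by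
  have endpoint (m : ℝ) : m * (x + y) - κ * x - κ * (m - a) * ((x + y) / κ) =
      a * (x + y) - κ * x := by
    field_simp
    ring
  rw [dividedDiff_insert ha hs, Finset.mul_sum]
  simp only [dividedDiff]
  rw [intervalIntegral.integral_finsetSum fun m _ =>
    Continuous.intervalIntegrable (by fun_prop) _ _]
  refine Finset.sum_congr rfl fun m hm => ?_
  have hma : m - a ≠ 0 := sub_ne_zero.2 fun h => ha (h ▸ hm)
  rw [intervalIntegral.integral_const_mul,
    integral_max_zero_sub_mul_pow n.succ_ne_zero (mul_ne_zero hκ.ne' hma), endpoint]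
  push_cast
  field_simp
  ring

theorem cutVolume_complementary (hc : 1 ≤ c) (hcκ : ∀ j, 1 ≤ κ - c j)
    (hinj : Function.Injective c) (hxy : 0 ≤ x + y) :
    cutVolume c (fun j => κ - c j) x y = (κ ^ n * (n + 1).factorial)⁻¹ *
      dividedDiff (nodes κ c) fun m => max 0 (m * (x + y) - κ * x) ^ (n + 1) := by
  have hκ : 0 < κ := by linarith [hc 0, hcκ 0, show (1 : Fin (n + 1) → ℝ) 0 = 1 from rfl]
  induction n generalizing x y with
  | zero => simpa using cutVolume_complementary_fin_one hc hcκ hxy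
  | succ n ih =>
    set T := (x + y) / κ
    have hκT : κ * T = x + y := mul_div_cancel₀ (x + y) hκ.ne'
    have hT : 0 ≤ T := by positivity
    have slice_eq (t : ℝ) (ht : t ∈ Set.uIcc 0 T) : sliceVolume c (fun j => κ - c j) x y t =
        (κ ^ n * (n + 1).factorial)⁻¹ * dividedDiff (nodes κ (Fin.tail c)) fun m =>
          max 0 ((m * (x + y) - κ * x) - κ * (m - c 0) * t) ^ (n + 1) := by
      rw [Set.uIcc_of_le hT] at ht
      have sum_nonneg : 0 ≤ x - c 0 * t + (y - (κ - c 0) * t) := by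
        nlinarith [mul_le_mul_of_nonneg_left ht.2 hκ.le]
      have arg_eq (m : ℝ) : m * (x - c 0 * t + (y - (κ - c 0) * t)) - κ * (x - c 0 * t) =
          m * (x + y) - κ * x - κ * (m - c 0) * t := by ring
      simp only [← arg_eq]
      exact ih (one_le_tail hc) (fun j => hcκ j.succ) (hinj.comp (Fin.succ_injective _)) sum_nonneg
    have vanish (t : ℝ) (ht : T < t) : x < c 0 * t ∨ y < (κ - c 0) * t := by
      by_contra! h
      nlinarith
    rw [cutVolume_eq_intervalIntegral hc hcκ hT vanish, intervalIntegral.integral_congr slice_eq,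
      intervalIntegral.integral_const_mul, integral_dividedDiff
        (apply_zero_notMem_nodes_tail hc hcκ hinj) (Finset.insert_nonempty _ _) hκ, ← nodes_succ,
      Nat.factorial_succ (n + 1), pow_succ, ← mul_assoc]
    push_cast
    congr 1
    field_simp
    ring

/-- The coefficient of `L ^ (k - 1)` in the volume of the region `t ≥ 0`, `∑ j t_j ≤ L`,
`∑ (k - j) t_j ≤ L` in the variables `t_1, …, t_{k-1}`. -/
noncomputable def diagonalCoeff (k : ℕ) : ℝ :=
  1 / (k - 1).factorial ^ 2 * (1 + 1 / (k : ℝ) ^ (k - 2) *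
    ∑ m ∈ Finset.Ioc (k / 2) (k - 1),
      (-1 : ℝ) ^ (k - m) * (2 * (m : ℝ) - k) ^ (k - 1) * ((k - 1).choose m) / ((k : ℝ) - m))

theorem diagonal_term_eq {m : ℕ} (hm : m ≤ n + 1) (z : ℝ) :
    z / (m.factorial * (n + 2 - m).factorial) =
      ((n + 1).factorial : ℝ)⁻¹ * (z * (n + 1).choose m / (((n + 2 : ℕ) : ℝ) - m)) := by
  obtain ⟨d, hd⟩ := Nat.exists_eq_add_of_le hm
  have choose_eq : ((n + 1).factorial : ℝ) = (n + 1).choose m * m.factorial * d.factorial := by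
    rw [← Nat.choose_mul_factorial_mul_factorial hm, hd, Nat.add_sub_cancel_left]
    push_cast
    rfl
  have choose_ne : ((n + 1).choose m : ℝ) ≠ 0 := by exact_mod_cast (Nat.choose_pos hm).ne'
  have sub_eq : ((n + 2 : ℕ) : ℝ) - m = d + 1 := by
    rw [show n + 2 = m + d + 1 by omega]
    push_cast
    ring
  rw [show n + 2 - m = d + 1 by omega, sub_eq, choose_eq, Nat.factorial_succ]
  push_cast
  field_simp

theorem sum_range_diagonal (n : ℕ) {L : ℝ} (hL : 0 ≤ L) :
    ∑ m ∈ Finset.range (n + 3), (-1) ^ (n + 2 - m) *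
        max 0 ((m : ℝ) * (L + L) - (n + 2 : ℕ) * L) ^ (n + 1) /
          (m.factorial * (n + 2 - m).factorial) =
      ((n + 2 : ℕ) : ℝ) ^ n * (n + 1).factorial * (diagonalCoeff (n + 2) * L ^ (n + 1)) := by
  set κ : ℝ := ((n + 2 : ℕ) : ℝ) with hκ
  have hκ₀ : κ ≠ 0 := by positivity
  have term_eq (m : ℕ) : (-1) ^ (n + 2 - m) * max 0 ((m : ℝ) * (L + L) - κ * L) ^ (n + 1) /
      (m.factorial * (n + 2 - m).factorial) = if (n + 2) / 2 < m then
        (-1) ^ (n + 2 - m) * (2 * m - κ) ^ (n + 1) / (m.factorial * (n + 2 - m).factorial) *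
          L ^ (n + 1) else 0 := by
    rw [show (m : ℝ) * (L + L) - κ * L = (2 * m - κ) * L by ring]
    split_ifs with h
    · have : κ ≤ 2 * m := by rw [hκ]; norm_cast; omega
      rw [max_eq_right (mul_nonneg (sub_nonneg.2 this) hL), mul_pow]
      ring
    · have : 2 * m ≤ κ := by rw [hκ]; norm_cast; omega
      rw [max_eq_left (mul_nonpos_of_nonpos_of_nonneg (sub_nonpos.2 this) hL)]
      simp
  have filter_eq : (Finset.range (n + 3)).filter (fun m => (n + 2) / 2 < m) =
      insert (n + 2) (Finset.Ioc ((n + 2) / 2) (n + 1)) := by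
    ext m
    simp only [Finset.mem_filter, Finset.mem_range, Finset.mem_insert, Finset.mem_Ioc]
    omega
  rw [Finset.sum_congr rfl fun m _ => term_eq m, ← Finset.sum_filter, filter_eq,
    Finset.sum_insert (by simp), ← Finset.sum_mul, Finset.sum_congr rfl fun m hm =>
      diagonal_term_eq (Finset.mem_Ioc.1 hm).2 _, ← Finset.mul_sum, diagonalCoeff]
  simp only [Nat.sub_self, pow_zero, Nat.factorial_zero, Nat.cast_one, Nat.add_sub_cancel,
    show n + 2 - 1 = n + 1 from rfl, ← hκ, Nat.factorial_succ (n + 1)]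
  push_cast
  rw [show ((n : ℝ) + 1 + 1) = κ by rw [hκ]; push_cast; ring]
  field_simp
  ring

theorem cutVolume_diagonal (n : ℕ) {L : ℝ} (hL : 0 ≤ L) :
    cutVolume (fun j : Fin (n + 1) => ((j : ℕ) : ℝ) + 1)
      (fun j => ((n + 2 : ℕ) : ℝ) - ((j : ℕ) + 1)) L L = diagonalCoeff (n + 2) * L ^ (n + 1) := by
  have hc : 1 ≤ fun j : Fin (n + 1) => ((j : ℕ) : ℝ) + 1 := fun j => by simp
  have hcκ (j : Fin (n + 1)) : 1 ≤ ((n + 2 : ℕ) : ℝ) - ((j : ℕ) + 1) := by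
    rw [le_sub_iff_add_le]
    norm_cast
    omega
  have hinj : Function.Injective fun j : Fin (n + 1) => ((j : ℕ) : ℝ) + 1 :=
    fun i j h => Fin.ext (by exact_mod_cast add_right_cancel h)
  have nodes_eq : nodes ((n + 2 : ℕ) : ℝ) (fun j : Fin (n + 1) => ((j : ℕ) : ℝ) + 1) =
      (Finset.range (n + 2 + 1)).image (Nat.cast : ℕ → ℝ) := by
    have : Finset.range (n + 2 + 1) =
        insert 0 (insert (n + 2) (Finset.univ.image fun j : Fin (n + 1) => (j : ℕ) + 1)) := by
      ext m
      simp only [Finset.mem_range, Finset.mem_insert, Finset.mem_image, Finset.mem_univ, true_and,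
        Fin.exists_iff]
      refine ⟨fun h => ?_, by rintro (h | h | ⟨j, hj, h⟩) <;> omega⟩
      by_contra! hm
      exact hm.2.2 (m - 1) (by omega) (by omega)
    rw [this, Finset.image_insert, Finset.image_insert, Finset.image_image]
    simp [nodes, Function.comp_def]
  rw [cutVolume_complementary hc hcκ hinj (add_nonneg hL hL), nodes_eq, dividedDiff_image_natCast,
    sum_range_diagonal n hL, inv_mul_cancel_left₀ (by positivity)]

end DiagonalVolume

section SumIntegral

theorem log_succ_sub_log_le {N : ℕ} (hN : 0 < N) :
    Real.log (N + 1 : ℕ) - Real.log N ≤ (N : ℝ)⁻¹ := by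
  have hN' : (0 : ℝ) < N := Nat.cast_pos.2 hN
  rw [← Real.log_div (by positivity) hN'.ne']
  refine (Real.log_le_sub_one_of_pos (by positivity)).trans_eq ?_
  push_cast
  field_simp
  ring

theorem inv_succ_le_log_succ_sub_log {N : ℕ} (hN : 0 < N) :
    ((N + 1 : ℕ) : ℝ)⁻¹ ≤ Real.log (N + 1 : ℕ) - Real.log N := by
  have hN' : (0 : ℝ) < N := Nat.cast_pos.2 hN
  rw [← Real.log_div (by positivity) hN'.ne']
  refine le_trans (le_of_eq ?_) (Real.one_sub_inv_le_log_of_pos (by positivity))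
  push_cast
  field_simp
  ring

variable {φ : ℝ → ℝ}

theorem integral_le_sum_inv_mul_log (hφ : Antitone φ) (hφ₀ : 0 ≤ φ) (N : ℕ) :
    ∫ t in (0 : ℝ)..Real.log (N + 1 : ℕ), φ t ≤
      ∑ b ∈ Finset.Icc 1 N, (b : ℝ)⁻¹ * φ (Real.log b) := by
  induction N with
  | zero => simp
  | succ N ih =>
    have log_le : Real.log (N + 1 : ℕ) ≤ Real.log (N + 1 + 1 : ℕ) :=
      Real.log_le_log (by positivity) (by exact_mod_cast Nat.le_succ _)
    rw [Finset.sum_Icc_succ_top (by omega), ← intervalIntegral.integral_add_adjacent_intervals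
      (b := Real.log (N + 1 : ℕ)) hφ.intervalIntegrable hφ.intervalIntegrable]
    refine add_le_add ih ?_
    calc ∫ t in Real.log (N + 1 : ℕ)..Real.log (N + 1 + 1 : ℕ), φ t
        ≤ ∫ _ in Real.log (N + 1 : ℕ)..Real.log (N + 1 + 1 : ℕ), φ (Real.log (N + 1 : ℕ)) :=
          intervalIntegral.integral_mono_on log_le hφ.intervalIntegrable
            intervalIntegrable_const fun t ht => hφ ht.1
      _ ≤ ((N + 1 : ℕ) : ℝ)⁻¹ * φ (Real.log (N + 1 : ℕ)) := by
          rw [intervalIntegral.integral_const, smul_eq_mul]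
          exact mul_le_mul_of_nonneg_right (log_succ_sub_log_le N.succ_pos) (hφ₀ _)

theorem sum_inv_mul_log_le_integral (hφ : Antitone φ) (hφ₀ : 0 ≤ φ) {N : ℕ} (hN : 1 ≤ N) :
    ∑ b ∈ Finset.Icc 1 N, (b : ℝ)⁻¹ * φ (Real.log b) ≤
      φ 0 + ∫ t in (0 : ℝ)..Real.log N, φ t := by
  induction N, hN using Nat.le_induction with
  | base => simp
  | succ N hN ih =>
    have log_le : Real.log N ≤ Real.log (N + 1 : ℕ) :=
      Real.log_le_log (by exact_mod_cast hN) (by exact_mod_cast Nat.le_succ _)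
    rw [Finset.sum_Icc_succ_top (by omega), ← intervalIntegral.integral_add_adjacent_intervals
      (b := Real.log N) hφ.intervalIntegrable hφ.intervalIntegrable, ← add_assoc]
    refine add_le_add ih ?_
    calc ((N + 1 : ℕ) : ℝ)⁻¹ * φ (Real.log (N + 1 : ℕ))
        ≤ ∫ _ in Real.log N..Real.log (N + 1 : ℕ), φ (Real.log (N + 1 : ℕ)) := by
          rw [intervalIntegral.integral_const, smul_eq_mul]
          exact mul_le_mul_of_nonneg_right (inv_succ_le_log_succ_sub_log hN) (hφ₀ _)
      _ ≤ ∫ t in Real.log N..Real.log (N + 1 : ℕ), φ t :=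
          intervalIntegral.integral_mono_on log_le intervalIntegrable_const
            hφ.intervalIntegrable fun t ht => hφ ht.2

theorem sum_Icc_inv_le {N : ℕ} {L : ℝ} (hN : N ≤ Real.exp L) (hL : 0 ≤ L) :
    ∑ b ∈ Finset.Icc 1 N, (b : ℝ)⁻¹ ≤ 1 + L := by
  have harmonic_le := harmonic_le_one_add_log N
  rw [harmonic_eq_sum_Icc] at harmonic_le
  push_cast at harmonic_le
  refine harmonic_le.trans (add_le_add_right ?_ 1)
  rcases N.eq_zero_or_pos with rfl | hN₀
  · simpa
  · exact (Real.log_le_iff_le_exp (by exact_mod_cast hN₀)).2 hN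

end SumIntegral

section HarmonicSum

variable {n : ℕ}

/-- The sum of `1 / (a₁ ⋯ aₙ)` over the tuples `a` in `s`, meant for finite `s`. -/
noncomputable def harmonicSum (s : Set (Fin n → ℕ)) : ℝ :=
  ∑' a, s.indicator (fun a => ∏ j, (a j : ℝ)⁻¹) a

variable {s : Set (Fin n → ℕ)}

theorem summable_harmonicSum (hs : s.Finite) :
    Summable (s.indicator fun a => ∏ j, (a j : ℝ)⁻¹) :=
  summable_of_hasFiniteSupport (hs.subset Set.support_indicator_subset)

theorem harmonicSum_coe (s : Finset (Fin n → ℕ)) :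
    harmonicSum (s : Set (Fin n → ℕ)) = ∑ a ∈ s, ∏ j, (a j : ℝ)⁻¹ := by
  rw [harmonicSum, ← tsum_subtype, Finset.tsum_subtype' s fun a => ∏ j, (a j : ℝ)⁻¹]

theorem harmonicSum_succ {s : Set (Fin (n + 1) → ℕ)} (hs : s.Finite) {T : Finset ℕ}
    (hT : ∀ a ∈ s, a 0 ∈ T) :
    harmonicSum s = ∑ b ∈ T, (b : ℝ)⁻¹ * harmonicSum {a : Fin n → ℕ | Fin.cons b a ∈ s} := by
  let e := Fin.consEquiv fun _ : Fin (n + 1) => ℕ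
  have slice (b : ℕ) (a : Fin n → ℕ) : s.indicator (fun a => ∏ j, (a j : ℝ)⁻¹) (e (b, a)) =
      (b : ℝ)⁻¹ * {a : Fin n → ℕ | Fin.cons b a ∈ s}.indicator (fun a => ∏ j, (a j : ℝ)⁻¹) a := by
    have he : e (b, a) = Fin.cons b a := rfl
    simp only [he, Set.indicator_apply, Set.mem_ofPred_eq, Fin.prod_univ_succ, Fin.cons_zero,
      Fin.cons_succ, mul_ite, mul_zero]
  have summable : Summable fun p => s.indicator (fun a => ∏ j, (a j : ℝ)⁻¹) (e p) :=
    e.summable_iff.2 (summable_harmonicSum hs)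
  rw [harmonicSum, ← e.tsum_eq, summable.tsum_prod]
  simp only [slice, tsum_mul_left]
  refine tsum_eq_sum fun b hb => ?_
  have : {a : Fin n → ℕ | Fin.cons b a ∈ s} = ∅ :=
    Set.eq_empty_of_forall_notMem fun a ha => hb (hT _ ha)
  simp [this]

end HarmonicSum

section Admissible

variable {n : ℕ} {α β : Fin n → ℝ} {x y L : ℝ}

/-- The point of the positive orthant attached to a tuple of integers by taking logarithms. -/
noncomputable def logVec (a : Fin n → ℕ) : Fin n → ℝ :=
  fun j => Real.log (a j)

theorem logVec_nonneg (a : Fin n → ℕ) : 0 ≤ logVec a := fun j => Real.log_natCast_nonneg (a j)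

/-- The tuples of positive integers `a` with `∏ a_j ^ α_j ≤ exp x` and `∏ a_j ^ β_j ≤ exp y`. -/
def admissible (α β : Fin n → ℝ) (x y : ℝ) : Set (Fin n → ℕ) :=
  {a | (∀ j, 0 < a j) ∧ logVec a ∈ cutOrthant α β x y}

theorem mem_admissible {a : Fin n → ℕ} : a ∈ admissible α β x y ↔
    (∀ j, 0 < a j) ∧ α ⬝ᵥ logVec a ≤ x ∧ β ⬝ᵥ logVec a ≤ y :=
  and_congr_right fun _ => and_iff_right (logVec_nonneg a)

theorem admissible_subset (hα : 1 ≤ α) {N : ℕ} (hN : ⌊Real.exp x⌋₊ ≤ N) :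
    admissible α β x y ⊆ Set.Icc 1 (fun _ => N) := by
  refine fun a ha => ⟨ha.1, fun j => (Nat.le_floor ?_).trans hN⟩
  exact (Real.log_le_iff_le_exp (by exact_mod_cast ha.1 j)).1
    ((cutOrthant_subset_Icc hα le_rfl ha.2).2 j)

theorem finite_admissible (hα : 1 ≤ α) : (admissible α β x y).Finite :=
  (Set.finite_Icc _ _).subset (admissible_subset hα le_rfl)

theorem cons_mem_admissible {α β : Fin (n + 1) → ℝ} {b : ℕ} {a : Fin n → ℕ} :
    (Fin.cons b a : Fin (n + 1) → ℕ) ∈ admissible α β x y ↔ 0 < b ∧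
      a ∈ admissible (Fin.tail α) (Fin.tail β) (x - α 0 * Real.log b) (y - β 0 * Real.log b) := by
  simp only [mem_admissible, dotProduct, logVec, Fin.forall_fin_succ, Fin.sum_univ_succ,
    Fin.cons_zero, Fin.cons_succ, Fin.tail, le_sub_iff_add_le', and_assoc]

theorem harmonicSum_admissible_succ {α β : Fin (n + 1) → ℝ} (hα : 1 ≤ α) {N : ℕ}
    (hN : ⌊Real.exp x⌋₊ ≤ N) :
    harmonicSum (admissible α β x y) = ∑ b ∈ Finset.Icc 1 N, (b : ℝ)⁻¹ * harmonicSum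
      (admissible (Fin.tail α) (Fin.tail β) (x - α 0 * Real.log b) (y - β 0 * Real.log b)) := by
  rw [harmonicSum_succ (finite_admissible hα) fun a ha => Finset.mem_Icc.2
    ⟨(admissible_subset hα hN ha).1 0, (admissible_subset hα hN ha).2 0⟩]
  refine Finset.sum_congr rfl fun b hb => ?_
  congr 2
  ext a
  exact cons_mem_admissible.trans (and_iff_right (Finset.mem_Icc.1 hb).1)

theorem sub_mul_log_le (hx : x ≤ L) {c : ℝ} (hc : 1 ≤ c) (b : ℕ) : x - c * Real.log b ≤ L :=
  (sub_le_self x (mul_nonneg (zero_le_one.trans hc) (Real.log_natCast_nonneg b))).trans hx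

theorem harmonicSum_admissible_fin_zero (α β : Fin 0 → ℝ) (x y : ℝ) :
    harmonicSum (admissible α β x y) = cutVolume α β x y := by
  rw [harmonicSum, cutVolume_fin_zero, tsum_eq_single default
    fun a ha => absurd (Subsingleton.elim _ _) ha]
  simp [Set.indicator_apply, mem_admissible]

theorem cutVolume_le_harmonicSum_admissible (hα : 1 ≤ α) (hβ : 1 ≤ β) :
    cutVolume α β x y ≤ harmonicSum (admissible α β x y) := by
  induction n generalizing x y with
  | zero => rw [harmonicSum_admissible_fin_zero]
  | succ n ih =>
    have le_log : x ≤ Real.log (⌊Real.exp x⌋₊ + 1 : ℕ) := by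
      rw [Real.le_log_iff_exp_le (by positivity)]
      exact_mod_cast (Nat.lt_floor_add_one _).le
    rw [harmonicSum_admissible_succ hα le_rfl,
      cutVolume_eq_intervalIntegral_of_le hα hβ (Real.log_natCast_nonneg _) le_log]
    refine (integral_le_sum_inv_mul_log (antitone_sliceVolume hα hβ) sliceVolume_nonneg _).trans
      (Finset.sum_le_sum fun b _ => ?_)
    exact mul_le_mul_of_nonneg_left (ih (one_le_tail hα) (one_le_tail hβ)) (by positivity)

theorem sum_inv_mul_sliceVolume_le {α β : Fin (n + 1) → ℝ} (hα : 1 ≤ α) (hβ : 1 ≤ β)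
    (hL : 0 ≤ L) (hx : x ≤ L) :
    ∑ b ∈ Finset.Icc 1 ⌊Real.exp L⌋₊, (b : ℝ)⁻¹ * sliceVolume α β x y (Real.log b) ≤
      L ^ n + cutVolume α β x y := by
  have one_le_floor : 1 ≤ ⌊Real.exp L⌋₊ := Nat.one_le_floor_iff _ |>.2 (Real.one_le_exp hL)
  have log_floor_le : Real.log ⌊Real.exp L⌋₊ ≤ L :=
    (Real.log_le_iff_le_exp (by exact_mod_cast one_le_floor)).2 (Nat.floor_le (Real.exp_pos _).le)
  refine (sum_inv_mul_log_le_integral (antitone_sliceVolume hα hβ) sliceVolume_nonneg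
    one_le_floor).trans (add_le_add ?_ ?_)
  · exact cutVolume_le_pow (one_le_tail hα) hL (by simpa using hx)
  · rw [cutVolume_eq_intervalIntegral_of_le hα hβ hL hx]
    exact intervalIntegral.integral_mono_interval le_rfl (Real.log_natCast_nonneg _) log_floor_le
      (ae_of_all _ sliceVolume_nonneg) (antitone_sliceVolume hα hβ).intervalIntegrable

theorem harmonicSum_admissible_le (hα : 1 ≤ α) (hβ : 1 ≤ β) (hL : 0 ≤ L) (hx : x ≤ L) :
    harmonicSum (admissible α β x y) ≤ cutVolume α β x y + n * (1 + L) ^ (n - 1) := by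
  induction n generalizing x y with
  | zero => simp [harmonicSum_admissible_fin_zero]
  | succ n ih =>
    set N := ⌊Real.exp L⌋₊
    have sum_inv_mul_le : (∑ b ∈ Finset.Icc 1 N, (b : ℝ)⁻¹) * (n * (1 + L) ^ (n - 1)) ≤
        n * (1 + L) ^ n := by
      calc (∑ b ∈ Finset.Icc 1 N, (b : ℝ)⁻¹) * (n * (1 + L) ^ (n - 1))
          ≤ (1 + L) * (n * (1 + L) ^ (n - 1)) := by
            gcongr
            exact sum_Icc_inv_le (Nat.floor_le (Real.exp_pos _).le) hL
        _ = n * (1 + L) ^ n := by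
            rcases n with _ | n
            · simp only [Nat.cast_zero, zero_mul, mul_zero]
            · rw [Nat.add_sub_cancel, pow_succ]; ring
    calc harmonicSum (admissible α β x y)
        ≤ ∑ b ∈ Finset.Icc 1 N, (b : ℝ)⁻¹ *
            (sliceVolume α β x y (Real.log b) + n * (1 + L) ^ (n - 1)) := by
          rw [harmonicSum_admissible_succ hα (Nat.floor_le_floor (Real.exp_le_exp.2 hx))]
          refine Finset.sum_le_sum fun b _ => mul_le_mul_of_nonneg_left ?_ (by positivity)
          exact ih (one_le_tail hα) (one_le_tail hβ) (sub_mul_log_le hx (hα 0) b)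
      _ = ∑ b ∈ Finset.Icc 1 N, (b : ℝ)⁻¹ * sliceVolume α β x y (Real.log b) +
            (∑ b ∈ Finset.Icc 1 N, (b : ℝ)⁻¹) * (n * (1 + L) ^ (n - 1)) := by
          simp only [mul_add, Finset.sum_add_distrib, Finset.sum_mul]
      _ ≤ L ^ n + cutVolume α β x y + n * (1 + L) ^ n :=
          add_le_add (sum_inv_mul_sliceVolume_le hα hβ hL hx) sum_inv_mul_le
      _ ≤ (1 + L) ^ n + cutVolume α β x y + n * (1 + L) ^ n := by gcongr; linarith
      _ = cutVolume α β x y + (n + 1 : ℕ) * (1 + L) ^ (n + 1 - 1) := by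
          rw [Nat.add_sub_cancel]; push_cast; ring

end Admissible

section LocalTerm

variable {ι : Type*}

theorem exists_eq_single_of_sum_eq_one [Fintype ι] [DecidableEq ι] {v : ι → ℕ}
    (hv : ∑ j, v j = 1) : ∃ l, v = Pi.single l 1 := by
  obtain ⟨l, hl⟩ : ∃ l, v l ≠ 0 := by
    by_contra! h
    simp [h] at hv
  have erase := Finset.add_sum_erase Finset.univ v (Finset.mem_univ l)
  have erase_eq_zero : ∑ j ∈ Finset.univ.erase l, v j = 0 := by omega
  refine ⟨l, funext fun j => ?_⟩
  rcases eq_or_ne j l with rfl | hj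
  · rw [Pi.single_eq_same]
    omega
  · rw [Pi.single_eq_of_ne hj]
    exact Finset.sum_eq_zero_iff.1 erase_eq_zero j (Finset.mem_erase.2 ⟨hj, Finset.mem_univ j⟩)

/-- The terms in the expansion of `∏ⱼ (1 - Xⱼ) * (1 + ∑ₗ Xₗ)`, the numerator of the local factor of
tuples with squarefree product: `(U, o)` picks `-Xⱼ` for `j ∈ U` and `Xₗ` for `o = some l`. -/
abbrev LocalTerm (ι : Type*) := Finset ι × Option ι

namespace LocalTerm

/-- The coefficient `±1` of a term. -/
def sign (i : LocalTerm ι) : ℝ := (-1) ^ i.1.card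

/-- The exponent vector of a term. -/
noncomputable def exponent (i : LocalTerm ι) (j : ι) : ℕ :=
  (if i.2 = some j then 1 else 0) + (if j ∈ i.1 then 1 else 0)

theorem abs_sign (i : LocalTerm ι) : |i.sign| = 1 := by
  rw [sign, abs_pow, abs_neg, abs_one, one_pow]

theorem exponent_le_two (i : LocalTerm ι) (j : ι) : i.exponent j ≤ 2 := by
  unfold exponent
  split_ifs <;> norm_num

theorem exponent_empty_none : exponent ((∅, none) : LocalTerm ι) = 0 := by
  ext j
  simp [exponent]

theorem exponent_singleton_none (l : ι) :
    exponent (({l}, none) : LocalTerm ι) = exponent (∅, some l) := by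
  ext j
  simp [exponent, eq_comm]

variable [Fintype ι]

/-- The total degree of a term. -/
noncomputable def degree (i : LocalTerm ι) : ℕ := ∑ j, i.exponent j

theorem degree_eq (i : LocalTerm ι) : i.degree = i.1.card + i.2.elim 0 fun _ => 1 := by
  rcases i with ⟨U, _ | l⟩ <;> simp [degree, exponent, Finset.sum_add_distrib, add_comm]

theorem sum_sign_mul_prod_of_snd (w : ι → ℕ → ℝ) (o : Option ι) :
    ∑ U : Finset ι, sign (U, o) * ∏ j, w j (exponent (U, o) j) =
      ∏ j, (w j (if o = some j then 1 else 0) - w j ((if o = some j then 1 else 0) + 1)) := by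
  rw [Finset.prod_sub, Finset.powerset_univ]
  refine Finset.sum_congr rfl fun U _ => ?_
  rw [sign, mul_assoc, ← Finset.prod_sdiff (Finset.subset_univ U)]
  congr 2 <;> refine Finset.prod_congr rfl fun j hj => ?_
  · simp [exponent, (Finset.mem_sdiff.1 hj).2]
  · simp [exponent, hj]

theorem sum_sign_mul_prod (w : ι → ℕ → ℝ) :
    ∑ i : LocalTerm ι, i.sign * ∏ j, w j (i.exponent j) =
      ∏ j, (w j 0 - w j 1) +
      ∑ l, ∏ j, (w j (if l = j then 1 else 0) - w j ((if l = j then 1 else 0) + 1)) := by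
  simp only [Fintype.sum_prod_type_right, Fintype.sum_option, sum_sign_mul_prod_of_snd,
    reduceCtorEq, if_false, zero_add, Option.some.injEq]

theorem filter_degree_lt_two : Finset.univ.filter (fun i : LocalTerm ι => ¬ 2 ≤ i.degree) =
    insert (∅, none) (Finset.univ.image (fun l => (∅, some l)) ∪
      Finset.univ.image fun l => ({l}, none)) := by
  ext ⟨U, o⟩
  have card_le_one : U.card ≤ 1 ↔ U = ∅ ∨ ∃ l, U = {l} := by
    rw [← Finset.card_eq_zero, ← Finset.card_eq_one]
    omega
  rcases o with _ | l
  · simp [degree_eq, card_le_one, eq_comm]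
  · simp [degree_eq, eq_comm]

theorem sum_sign_mul (F : (ι → ℕ) → ℝ) : ∑ i : LocalTerm ι, i.sign * F i.exponent =
    F 0 + ∑ i : LocalTerm ι with 2 ≤ i.degree, i.sign * F i.exponent := by
  have disjoint : Disjoint (Finset.univ.image fun l : ι => ((∅, some l) : LocalTerm ι))
      (Finset.univ.image fun l => ({l}, none)) := by
    simp [Finset.disjoint_left]
  rw [← Finset.sum_filter_not_add_sum_filter _ fun i : LocalTerm ι => 2 ≤ i.degree,
    filter_degree_lt_two, Finset.sum_insert (by simp), Finset.sum_union disjoint,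
    Finset.sum_image fun _ _ _ _ h => by simpa using h,
    Finset.sum_image fun _ _ _ _ h => by simpa using h]
  simp [exponent_singleton_none, exponent_empty_none, sign]

theorem sum_sign_mul_pow_degree (t : ℝ) : ∑ i : LocalTerm ι, i.sign * t ^ i.degree =
    (1 - t) ^ Fintype.card ι * (1 + Fintype.card ι * t) := by
  have pow_sub (e : ℕ) : t ^ e - t ^ (e + 1) = t ^ e * (1 - t) := by ring
  have h := sum_sign_mul_prod fun (_ : ι) e => t ^ e
  simp only [Finset.prod_pow_eq_pow_sum, pow_sub, Finset.prod_mul_distrib, Finset.prod_const,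
    Finset.card_univ] at h
  simp only [degree, h, Finset.sum_const_zero, pow_zero, one_mul, Finset.sum_ite_eq,
    Finset.mem_univ, ↓reduceIte, pow_one, Finset.sum_const, Finset.card_univ, nsmul_eq_mul]
  ring

theorem sum_sign_mul_ite_exponent_le (v : ι → ℕ) :
    ∑ i : LocalTerm ι, i.sign * (if i.exponent ≤ v then 1 else 0) =
      if ∑ j, v j ≤ 1 then 1 else 0 := by
  have sub_eq (d e : ℕ) : ((if e ≤ d then (1 : ℝ) else 0) - if e + 1 ≤ d then 1 else 0) =
      if d = e then 1 else 0 := by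
    split_ifs <;> first | omega | norm_num
  have single_apply (l j : ι) : (if l = j then 1 else 0) = (Pi.single l 1 : ι → ℕ) j := by
    simp only [Pi.single_apply, eq_comm]
  calc ∑ i : LocalTerm ι, i.sign * (if i.exponent ≤ v then 1 else 0)
      = (if v = 0 then 1 else 0) + ∑ l, if v = Pi.single l 1 then 1 else 0 := by
        have h := sum_sign_mul_prod fun j e => if e ≤ v j then (1 : ℝ) else 0
        rw [Finset.prod_congr rfl fun j _ => sub_eq (v j) 0] at h
        simp only [sub_eq, single_apply, Fintype.prod_ite_zero, Finset.prod_const_one] at h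
        simpa only [Pi.le_def, funext_iff, Pi.zero_apply] using h
    _ = if ∑ j, v j ≤ 1 then 1 else 0 := by
        rcases (by omega : ∑ j, v j = 0 ∨ ∑ j, v j = 1 ∨ 2 ≤ ∑ j, v j) with hv | hv | hv
        · obtain rfl : v = 0 := by simpa [funext_iff] using hv
          simp [eq_comm (a := (0 : ι → ℕ))]
        · obtain ⟨l, rfl⟩ := exists_eq_single_of_sum_eq_one hv
          have single_inj (m : ι) : (Pi.single l 1 : ι → ℕ) = Pi.single m 1 ↔ m = l :=
            ⟨fun h => by simpa [Pi.single_apply] using congrFun h m, by rintro rfl; rfl⟩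
          simp [single_inj]
        · have ne_zero : v ≠ 0 := by rintro rfl; simp at hv
          have ne_single (l : ι) : v ≠ Pi.single l 1 := by rintro rfl; simp at hv
          simp [ne_zero, ne_single, Nat.lt_of_succ_le hv]

end LocalTerm

end LocalTerm

section Dilation

variable {n : ℕ} {α β : Fin n → ℝ} {x y : ℝ}

theorem harmonicSum_eq_sum {I : Type*} [Fintype I] (c : I → ℝ) {s : Set (Fin n → ℕ)}
    {t : I → Set (Fin n → ℕ)} (ht : ∀ i, (t i).Finite)
    (h : ∀ a, (if a ∈ s then (1 : ℝ) else 0) = ∑ i, c i * if a ∈ t i then 1 else 0) :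
    harmonicSum s = ∑ i, c i * harmonicSum (t i) := by
  have indicator_eq (u : Set (Fin n → ℕ)) (a : Fin n → ℕ) :
      u.indicator (fun a => ∏ j, (a j : ℝ)⁻¹) a =
        (if a ∈ u then 1 else 0) * ∏ j, (a j : ℝ)⁻¹ := by
    rw [Set.indicator_apply, ite_mul, one_mul, zero_mul]
  simp only [harmonicSum, ← tsum_mul_left]
  rw [← Summable.tsum_finsetSum fun i _ => (summable_harmonicSum (ht i)).mul_left (c i)]
  refine tsum_congr fun a => ?_
  simp only [indicator_eq, h, Finset.sum_mul, mul_assoc]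

theorem harmonicSum_image_mul {d : Fin n → ℕ} (hd : ∀ j, 0 < d j) (s : Set (Fin n → ℕ)) :
    harmonicSum ((d * ·) '' s) = (∏ j, (d j : ℝ)⁻¹) * harmonicSum s := by
  have injective : Function.Injective (d * ·) := fun a b hab =>
    funext fun j => Nat.eq_of_mul_eq_mul_left (hd j) (congrFun hab j)
  rw [harmonicSum, ← injective.tsum_eq fun a ha => Set.image_subset_range _ _
    (Set.support_indicator_subset ha), harmonicSum, ← tsum_mul_left]
  refine tsum_congr fun a => ?_
  simp [Set.indicator_apply, injective.mem_set_image, Finset.prod_mul_distrib, mul_comm]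

theorem logVec_mul {d a : Fin n → ℕ} (hd : ∀ j, 0 < d j) (ha : ∀ j, 0 < a j) :
    logVec (d * a) = logVec d + logVec a := by
  ext j
  simp only [logVec, Pi.mul_apply, Pi.add_apply, Nat.cast_mul]
  exact Real.log_mul (by exact_mod_cast (hd j).ne') (by exact_mod_cast (ha j).ne')

theorem mul_mem_admissible {d : Fin n → ℕ} (hd : ∀ j, 0 < d j) (a : Fin n → ℕ) :
    d * a ∈ admissible α β x y ↔
      a ∈ admissible α β (x - α ⬝ᵥ logVec d) (y - β ⬝ᵥ logVec d) := by
  have pos_iff : (∀ j, 0 < (d * a) j) ↔ ∀ j, 0 < a j :=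
    forall_congr' fun j => Nat.mul_pos_iff_of_pos_left (hd j)
  rw [mem_admissible, mem_admissible, pos_iff]
  refine and_congr_right fun ha => ?_
  simp only [logVec_mul hd ha, dotProduct_add, le_sub_iff_add_le']

/-- The tuples whose product is not divisible by the square of a prime in `S`. -/
def squarefreeAt (S : Finset Nat.Primes) : Set (Fin n → ℕ) :=
  {a | ∀ p ∈ S, ¬ (p : ℕ) ^ 2 ∣ ∏ j, a j}

theorem mul_mem_squarefreeAt {S : Finset Nat.Primes} {d : Fin n → ℕ}
    (hd : ∀ q ∈ S, (q : ℕ).Coprime (∏ j, d j)) (a : Fin n → ℕ) :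
    d * a ∈ squarefreeAt S ↔ a ∈ squarefreeAt S := by
  refine forall₂_congr fun q hq => not_congr ?_
  simp only [Pi.mul_apply, Finset.prod_mul_distrib]
  exact ((hd q hq).pow_left 2).dvd_mul_left

theorem dvd_inter_eq_image {S : Finset Nat.Primes} {d : Fin n → ℕ} (hd : ∀ j, 0 < d j)
    (hdS : ∀ q ∈ S, (q : ℕ).Coprime (∏ j, d j)) :
    {a | a ∈ admissible α β x y ∩ squarefreeAt S ∧ d ∣ a} = (d * ·) ''
      (admissible α β (x - α ⬝ᵥ logVec d) (y - β ⬝ᵥ logVec d) ∩ squarefreeAt S) := by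
  ext a
  constructor
  · rintro ⟨⟨ha, haS⟩, a, rfl⟩
    exact ⟨a, ⟨(mul_mem_admissible hd a).1 ha, (mul_mem_squarefreeAt hdS a).1 haS⟩, rfl⟩
  · rintro ⟨a, ⟨ha, haS⟩, rfl⟩
    exact ⟨⟨(mul_mem_admissible hd a).2 ha, (mul_mem_squarefreeAt hdS a).2 haS⟩, dvd_mul_right d a⟩

theorem ite_not_sq_dvd_prod {p : ℕ} (hp : p.Prime) {a : Fin n → ℕ} (ha : ∀ j, 0 < a j) :
    (if ¬ p ^ 2 ∣ ∏ j, a j then (1 : ℝ) else 0) =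
      ∑ i : LocalTerm (Fin n), i.sign * if (fun j => p ^ i.exponent j) ∣ a then 1 else 0 := by
  have dvd_iff (i : LocalTerm (Fin n)) :
      (fun j => p ^ i.exponent j) ∣ a ↔ i.exponent ≤ fun j => (a j).factorization p :=
    pi_dvd_iff.trans (forall_congr' fun j => hp.pow_dvd_iff_le_factorization (ha j).ne')
  have sq_dvd_iff : ¬ p ^ 2 ∣ ∏ j, a j ↔ ∑ j, (a j).factorization p ≤ 1 := by
    rw [hp.pow_dvd_iff_le_factorization (Finset.prod_ne_zero_iff.2 fun j _ => (ha j).ne'),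
      Nat.factorization_prod fun j _ => (ha j).ne', Finsupp.finsetSum_apply]
    omega
  simp only [dvd_iff, sq_dvd_iff, LocalTerm.sum_sign_mul_ite_exponent_le]

theorem harmonicSum_not_sq_dvd_prod {p : ℕ} (hp : p.Prime) {s : Set (Fin n → ℕ)} (hs : s.Finite)
    (hs₀ : ∀ a ∈ s, ∀ j, 0 < a j) :
    harmonicSum {a | a ∈ s ∧ ¬ p ^ 2 ∣ ∏ j, a j} = ∑ i : LocalTerm (Fin n), i.sign *
      harmonicSum {a | a ∈ s ∧ (fun j => p ^ i.exponent j) ∣ a} := by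
  refine harmonicSum_eq_sum _ (fun i => hs.subset fun a ha => ha.1) fun a => ?_
  by_cases ha : a ∈ s
  · simp only [Set.mem_ofPred_eq, ha, true_and, ite_not_sq_dvd_prod hp (hs₀ a ha)]
  · simp [ha]

theorem inter_squarefreeAt_insert (s : Set (Fin n → ℕ)) (p : Nat.Primes) (S : Finset Nat.Primes) :
    s ∩ squarefreeAt (insert p S) = {a | a ∈ s ∩ squarefreeAt S ∧ ¬ (p : ℕ) ^ 2 ∣ ∏ j, a j} := by
  ext a
  simp only [squarefreeAt, Finset.forall_mem_insert, Set.mem_inter_iff, Set.mem_ofPred_eq]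
  tauto

theorem harmonicSum_squarefreeAt_insert (hα : 1 ≤ α) {S : Finset Nat.Primes} {p : Nat.Primes}
    (hpS : p ∉ S) :
    harmonicSum (admissible α β x y ∩ squarefreeAt (insert p S)) =
      ∑ i : LocalTerm (Fin n), i.sign * ((p : ℝ)⁻¹ ^ (∑ j, i.exponent j) * harmonicSum
        (admissible α β (x - α ⬝ᵥ logVec fun j => (p : ℕ) ^ i.exponent j)
          (y - β ⬝ᵥ logVec fun j => (p : ℕ) ^ i.exponent j) ∩ squarefreeAt S)) := by
  have pow_pos (i : LocalTerm (Fin n)) (j : Fin n) : 0 < (p : ℕ) ^ i.exponent j :=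
    Nat.pow_pos p.2.pos
  have coprime (i : LocalTerm (Fin n)) (q : Nat.Primes) (hq : q ∈ S) :
      (q : ℕ).Coprime (∏ j, (p : ℕ) ^ i.exponent j) := by
    refine Nat.Coprime.prod_right fun j _ => Nat.Coprime.pow_right _ ?_
    exact (Nat.coprime_primes q.2 p.2).2 fun h => hpS (Subtype.ext h ▸ hq)
  have prod_inv (i : LocalTerm (Fin n)) :
      ∏ j, (((p : ℕ) ^ i.exponent j : ℕ) : ℝ)⁻¹ = (p : ℝ)⁻¹ ^ (∑ j, i.exponent j) := by
    simp only [Nat.cast_pow, ← inv_pow, Finset.prod_pow_eq_pow_sum]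
  rw [inter_squarefreeAt_insert, harmonicSum_not_sq_dvd_prod p.2
    ((finite_admissible hα).inter_of_left _) fun a ha => ha.1.1]
  simp only [dvd_inter_eq_image (pow_pos _) (coprime _), harmonicSum_image_mul (pow_pos _),
    prod_inv]

end Dilation

section SquarefreeFactor

/-- The density of the `n`-tuples whose product is not divisible by the square of a prime `p`,
counted with weight `1 / (a₁ ⋯ aₙ)`, as a function of `t = 1 / p`. -/
def squarefreeFactor (n : ℕ) (t : ℝ) : ℝ := (1 - t) ^ n * (1 + n * t)

variable {n : ℕ} {t : ℝ}

theorem squarefreeFactor_nonneg (ht₀ : 0 ≤ t) (ht₁ : t ≤ 1) : 0 ≤ squarefreeFactor n t :=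
  mul_nonneg (pow_nonneg (sub_nonneg.2 ht₁) n) (by positivity)

theorem squarefreeFactor_le_one (ht₀ : 0 ≤ t) (ht₁ : t ≤ 1) : squarefreeFactor n t ≤ 1 :=
  calc (1 - t) ^ n * (1 + n * t)
      ≤ (1 - t) ^ n * (1 + t) ^ n :=
        mul_le_mul_of_nonneg_left (one_add_mul_le_pow (by linarith) n)
          (pow_nonneg (sub_nonneg.2 ht₁) n)
    _ = (1 - t ^ 2) ^ n := by rw [← mul_pow]; ring
    _ ≤ 1 := pow_le_one₀ (by nlinarith) (by nlinarith)

theorem one_sub_sq_le_squarefreeFactor (ht₀ : 0 ≤ t) (ht₁ : t ≤ 1) :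
    1 - (n * t) ^ 2 ≤ squarefreeFactor n t :=
  calc 1 - (n * t) ^ 2 = (1 + n * -t) * (1 + n * t) := by ring
    _ ≤ (1 + -t) ^ n * (1 + n * t) :=
        mul_le_mul_of_nonneg_right (one_add_mul_le_pow (by linarith) n) (by positivity)
    _ = squarefreeFactor n t := by rw [← sub_eq_add_neg, squarefreeFactor]

theorem inv_prime_le_one (p : Nat.Primes) : ((p : ℕ) : ℝ)⁻¹ ≤ 1 :=
  inv_le_one_of_one_le₀ (by exact_mod_cast p.2.one_le)

theorem multipliable_squarefreeFactor (n : ℕ) :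
    Multipliable fun p : Nat.Primes => squarefreeFactor n ((p : ℕ) : ℝ)⁻¹ := by
  have summable_inv_sq : Summable fun p : Nat.Primes => (n * ((p : ℕ) : ℝ)⁻¹) ^ 2 := by
    simp only [mul_pow, inv_pow]
    exact ((Real.summable_nat_pow_inv.2 one_lt_two).comp_injective
      Nat.Primes.coe_nat_injective).mul_left _
  have summable : Summable fun p : Nat.Primes => squarefreeFactor n ((p : ℕ) : ℝ)⁻¹ - 1 := by
    refine summable_inv_sq.of_norm_bounded fun p => ?_
    have lower := one_sub_sq_le_squarefreeFactor (n := n) (by positivity) (inv_prime_le_one p)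
    have upper := squarefreeFactor_le_one (n := n) (by positivity) (inv_prime_le_one p)
    rw [Real.norm_eq_abs, abs_le]
    constructor <;> linarith [sq_nonneg (n * ((p : ℕ) : ℝ)⁻¹)]
  simpa only [add_sub_cancel] using Real.multipliable_one_add_of_summable summable

end SquarefreeFactor

section Approximation

theorem LocalTerm.abs_sum_sign_mul_sub_le {ι : Type*} [Fintype ι] {F : (ι → ℕ) → ℝ} {B : ℝ}
    (hB : 0 ≤ B) (hF : ∀ i : LocalTerm ι, 2 ≤ i.degree → |F i.exponent| ≤ B) :
    |∑ i : LocalTerm ι, i.sign * F i.exponent - F 0| ≤ Fintype.card (LocalTerm ι) * B := by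
  rw [LocalTerm.sum_sign_mul, add_sub_cancel_left]
  calc |∑ i : LocalTerm ι with 2 ≤ i.degree, i.sign * F i.exponent|
      ≤ ∑ i : LocalTerm ι with 2 ≤ i.degree, |i.sign * F i.exponent| :=
        Finset.abs_sum_le_sum_abs _ _
    _ ≤ ∑ i : LocalTerm ι with 2 ≤ i.degree, B := Finset.sum_le_sum fun i hi => by
        rw [abs_mul, LocalTerm.abs_sign, one_mul]
        exact hF i (Finset.mem_filter.1 hi).2
    _ ≤ Fintype.card (LocalTerm ι) * B := by
        rw [Finset.sum_const, nsmul_eq_mul]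
        gcongr
        exact Finset.card_le_univ _

variable {n : ℕ} {α β : Fin (n + 1) → ℝ} {P E κ : ℝ} {G : ℝ → ℝ → ℝ}

/-- `G` is approximated by `P * cutVolume α β`, with an error one order below the size `L ^ (n + 1)`
of the main term at arguments of size `L`. -/
def ApproxCutVolume (α β : Fin (n + 1) → ℝ) (P E : ℝ) (G : ℝ → ℝ → ℝ) : Prop :=
  ∀ ⦃L x y : ℝ⦄, 0 ≤ L → x ≤ L → |G x y - P * cutVolume α β x y| ≤ E * (1 + L) ^ n

theorem ApproxCutVolume.mono (h : ApproxCutVolume α β P E G) {E' : ℝ} (hE : E ≤ E') :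
    ApproxCutVolume α β P E' G := fun L x y hL hx =>
  (h (y := y) hL hx).trans (mul_le_mul_of_nonneg_right hE (by positivity))

theorem ApproxCutVolume.comp_sub (h : ApproxCutVolume α β P E G) (hα : 1 ≤ α) (hβ : 1 ≤ β)
    (hP₀ : 0 ≤ P) (hP₁ : P ≤ 1) {s s' : ℝ} (hs : 0 ≤ s) (hs' : 0 ≤ s') (hκ : s + s' ≤ κ) :
    ApproxCutVolume α β P (E + κ) fun x y => G (x - s) (y - s') := by
  intro L x y hL hx
  set V := cutVolume α β x y
  set V' := cutVolume α β (x - s) (y - s')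
  have volume_diff : |P * V' - P * V| ≤ κ * (1 + L) ^ n := by
    have mono : V' ≤ V := cutVolume_mono hα (sub_le_self x hs) (sub_le_self y hs')
    rw [← mul_sub, abs_mul, abs_of_nonneg hP₀, abs_sub_comm, abs_of_nonneg (sub_nonneg.2 mono)]
    calc P * (V - V') ≤ V - V' := mul_le_of_le_one_left (sub_nonneg.2 mono) hP₁
      _ ≤ (s + s') * (1 + L) ^ n := cutVolume_sub_le hα hβ hL hx hs hs'
      _ ≤ κ * (1 + L) ^ n := by gcongr
  calc |G (x - s) (y - s') - P * V|
      ≤ |G (x - s) (y - s') - P * V'| + |P * V' - P * V| := abs_sub_le _ _ _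
    _ ≤ E * (1 + L) ^ n + κ * (1 + L) ^ n :=
        add_le_add (h hL ((sub_le_self x hs).trans hx)) volume_diff
    _ = (E + κ) * (1 + L) ^ n := by ring

theorem dotProduct_logVec_nonneg {γ : Fin n → ℝ} (hγ : 1 ≤ γ) (d : Fin n → ℕ) :
    0 ≤ γ ⬝ᵥ logVec d :=
  dotProduct_nonneg_of_nonneg (zero_le_one.trans hγ) (logVec_nonneg d)

theorem dotProduct_logVec_pow_le {γ : Fin n → ℝ} (hγ : 1 ≤ γ) (p : ℕ) {e : Fin n → ℕ}
    (he : ∀ j, e j ≤ 2) : γ ⬝ᵥ logVec (fun j => p ^ e j) ≤ 2 * (∑ j, γ j) * Real.log p := by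
  rw [mul_assoc, mul_left_comm, Finset.sum_mul]
  refine Finset.sum_le_sum fun j _ => mul_le_mul_of_nonneg_left ?_ (zero_le_one.trans (hγ j))
  rw [logVec, Nat.cast_pow, Real.log_pow]
  gcongr
  exact_mod_cast he j

theorem ApproxCutVolume.comp_sub_logVec (h : ApproxCutVolume α β P E G) (hα : 1 ≤ α) (hβ : 1 ≤ β)
    (hP₀ : 0 ≤ P) (hP₁ : P ≤ 1) (p : ℕ) {e : Fin (n + 1) → ℕ} (he : ∀ j, e j ≤ 2) :
    ApproxCutVolume α β P (E + 2 * (∑ j, (α j + β j)) * Real.log p) fun x y =>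
      G (x - α ⬝ᵥ logVec fun j => p ^ e j) (y - β ⬝ᵥ logVec fun j => p ^ e j) := by
  refine h.comp_sub hα hβ hP₀ hP₁ (dotProduct_logVec_nonneg hα _)
    (dotProduct_logVec_nonneg hβ _) ?_
  rw [Finset.sum_add_distrib, mul_add, add_mul]
  exact add_le_add (dotProduct_logVec_pow_le hα p he) (dotProduct_logVec_pow_le hβ p he)

theorem ApproxCutVolume.sum_localTerm (h : ApproxCutVolume α β P E G) (hα : 1 ≤ α) (hβ : 1 ≤ β)
    (hP₀ : 0 ≤ P) (hP₁ : P ≤ 1) {p : ℕ} (hp : 1 ≤ p) :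
    ApproxCutVolume α β (squarefreeFactor (n + 1) (p : ℝ)⁻¹ * P)
      (E + Fintype.card (LocalTerm (Fin (n + 1))) * ((p : ℝ)⁻¹ ^ 2 *
        (E + 2 * (∑ j, (α j + β j)) * Real.log p))) fun x y =>
      ∑ i : LocalTerm (Fin (n + 1)), i.sign * ((p : ℝ)⁻¹ ^ (∑ j, i.exponent j) *
        G (x - α ⬝ᵥ logVec fun j => p ^ i.exponent j)
          (y - β ⬝ᵥ logVec fun j => p ^ i.exponent j)) := by
  intro L x y hL hx
  set t : ℝ := (p : ℝ)⁻¹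
  set V := cutVolume α β x y
  set B := (E + 2 * (∑ j, (α j + β j)) * Real.log p) * (1 + L) ^ n
  set D : (Fin (n + 1) → ℕ) → ℝ := fun e =>
    G (x - α ⬝ᵥ logVec fun j => p ^ e j) (y - β ⬝ᵥ logVec fun j => p ^ e j) - P * V with hD
  have D_le (i : LocalTerm (Fin (n + 1))) : |D i.exponent| ≤ B :=
    h.comp_sub_logVec hα hβ hP₀ hP₁ p i.exponent_le_two hL hx
  have D_zero_le : |D 0| ≤ E * (1 + L) ^ n := by
    have logVec_one : (logVec fun _ : Fin (n + 1) => 1) = 0 := by ext; simp [logVec]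
    simpa [D, logVec_one] using h hL hx
  have B_nonneg : 0 ≤ B := (abs_nonneg _).trans (D_le (∅, none))
  have error_le := LocalTerm.abs_sum_sign_mul_sub_le (F := fun e => t ^ (∑ j, e j) * D e)
    (B := t ^ 2 * B) (by positivity) fun i hi => by
      rw [abs_mul, abs_of_nonneg (by positivity)]
      exact mul_le_mul (pow_le_pow_of_le_one (by positivity)
        (inv_le_one_of_one_le₀ (by exact_mod_cast hp)) hi) (D_le i) (abs_nonneg _) (by positivity)
  have factor_eq := LocalTerm.sum_sign_mul_pow_degree (ι := Fin (n + 1)) t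
  simp only [Fintype.card_fin, LocalTerm.degree] at factor_eq
  have sum_eq : ∑ i : LocalTerm (Fin (n + 1)), i.sign * (t ^ (∑ j, i.exponent j) *
      G (x - α ⬝ᵥ logVec fun j => p ^ i.exponent j) (y - β ⬝ᵥ logVec fun j => p ^ i.exponent j)) -
      squarefreeFactor (n + 1) t * P * V =
      ∑ i : LocalTerm (Fin (n + 1)), i.sign * (t ^ (∑ j, i.exponent j) * D i.exponent) := by
    simp only [hD, mul_sub, Finset.sum_sub_distrib, ← mul_assoc, ← Finset.sum_mul, factor_eq,
      squarefreeFactor]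
  simp only [Pi.zero_apply, Finset.sum_const_zero, pow_zero, one_mul] at error_le
  rw [sum_eq]
  linarith [abs_sub_abs_le_abs_sub
    (∑ i : LocalTerm (Fin (n + 1)), i.sign * (t ^ (∑ j, i.exponent j) * D i.exponent)) (D 0)]

/-- The factor by which sieving out the multiples of `p ^ 2` increases one plus the error constant
of `ApproxCutVolume` for `harmonicSum`. -/
noncomputable def errorFactor (α β : Fin n → ℝ) (p : ℕ) : ℝ :=
  Fintype.card (LocalTerm (Fin n)) * ((p : ℝ)⁻¹ ^ 2 * (1 + 2 * (∑ j, (α j + β j)) * Real.log p))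

theorem approxCutVolume_harmonicSum (hα : 1 ≤ α) (hβ : 1 ≤ β) :
    ApproxCutVolume α β 1 (n + 1) fun x y => harmonicSum (admissible α β x y) := by
  intro L x y hL hx
  have lower := cutVolume_le_harmonicSum_admissible (x := x) (y := y) hα hβ
  have upper := harmonicSum_admissible_le (y := y) hα hβ hL hx
  rw [one_mul, abs_of_nonneg (sub_nonneg.2 lower)]
  push_cast [Nat.add_sub_cancel] at upper
  linarith

theorem weights_mul_log_nonneg {α β : Fin n → ℝ} (hα : 1 ≤ α) (hβ : 1 ≤ β) (p : ℕ) :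
    0 ≤ 2 * (∑ j, (α j + β j)) * Real.log p :=
  mul_nonneg (mul_nonneg zero_le_two (Finset.sum_nonneg fun j _ =>
    add_nonneg (zero_le_one.trans (hα j)) (zero_le_one.trans (hβ j)))) (Real.log_natCast_nonneg p)

theorem errorFactor_nonneg {α β : Fin n → ℝ} (hα : 1 ≤ α) (hβ : 1 ≤ β) (p : ℕ) :
    0 ≤ errorFactor α β p := by
  have := weights_mul_log_nonneg hα hβ p
  rw [errorFactor]
  positivity

theorem summable_errorFactor (α β : Fin n → ℝ) :
    Summable fun p : Nat.Primes => errorFactor α β p := by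
  have summable_log : Summable fun m : ℕ => (m : ℝ)⁻¹ ^ 2 * Real.log m := by
    have log_isBigO : (fun m : ℕ => Real.log m) =O[atTop] fun m : ℕ => (m : ℝ) ^ (1 / 2 : ℝ) :=
      ((isLittleO_log_rpow_atTop one_half_pos).comp_tendsto tendsto_natCast_atTop_atTop).isBigO
    refine summable_of_isBigO_nat (Real.summable_nat_rpow_inv.2 (by norm_num : (1 : ℝ) < 3 / 2))
      (((Asymptotics.isBigO_refl (fun m : ℕ => (m : ℝ)⁻¹ ^ 2) atTop).mul log_isBigO).congr_right
        fun m => ?_)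
    rcases m.eq_zero_or_pos with rfl | hm
    · simp
    · rw [← Real.rpow_natCast, ← Real.rpow_neg_one, ← Real.rpow_mul m.cast_nonneg,
        ← Real.rpow_add (by exact_mod_cast hm), ← Real.rpow_neg m.cast_nonneg]
      norm_num
  have summable_sq : Summable fun m : ℕ => (m : ℝ)⁻¹ ^ 2 := by
    simpa only [inv_pow] using Real.summable_nat_pow_inv.2 one_lt_two
  have summable : Summable fun m : ℕ => errorFactor α β m := by
    refine ((summable_sq.add (summable_log.mul_left (2 * ∑ j, (α j + β j)))).mul_left
      (Fintype.card (LocalTerm (Fin n)) : ℝ)).congr fun m => ?_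
    rw [errorFactor]
    ring
  exact summable.comp_injective Nat.Primes.coe_nat_injective

theorem approxCutVolume_harmonicSum_squarefreeAt (hα : 1 ≤ α) (hβ : 1 ≤ β)
    (S : Finset Nat.Primes) :
    ApproxCutVolume α β (∏ p ∈ S, squarefreeFactor (n + 1) ((p : ℕ) : ℝ)⁻¹)
      ((n + 2) * ∏ p ∈ S, (1 + errorFactor α β p) - 1)
      fun x y => harmonicSum (admissible α β x y ∩ squarefreeAt S) := by
  induction S using Finset.induction_on with
  | empty =>
    have squarefreeAt_empty : (squarefreeAt ∅ : Set (Fin (n + 1) → ℕ)) = Set.univ := by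
      ext
      simp [squarefreeAt]
    convert approxCutVolume_harmonicSum hα hβ using 1
    · rw [Finset.prod_empty]
    · rw [Finset.prod_empty]
      ring
    · simp only [squarefreeAt_empty, Set.inter_univ]
  | insert p S hpS ih =>
    have factor_nonneg (q : Nat.Primes) : 0 ≤ squarefreeFactor (n + 1) ((q : ℕ) : ℝ)⁻¹ :=
      squarefreeFactor_nonneg (by positivity) (inv_prime_le_one q)
    have step := ih.sum_localTerm hα hβ (Finset.prod_nonneg fun q _ => factor_nonneg q)
      (Finset.prod_le_one (fun q _ => factor_nonneg q)
        fun q _ => squarefreeFactor_le_one (by positivity) (inv_prime_le_one q)) p.2.one_le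
    simp only [← harmonicSum_squarefreeAt_insert hα hpS] at step
    rw [Finset.prod_insert hpS, Finset.prod_insert hpS]
    refine step.mono ?_
    have one_le : 1 ≤ ∏ q ∈ S, (1 + errorFactor α β q) :=
      Finset.one_le_prod fun q _ => le_add_of_nonneg_right (errorFactor_nonneg hα hβ q)
    have log_nonneg := weights_mul_log_nonneg hα hβ p
    set w := 2 * (∑ j, (α j + β j)) * Real.log p
    set A := ((n : ℝ) + 2) * ∏ q ∈ S, (1 + errorFactor α β q)
    have one_le_A : 1 ≤ A :=
      one_le_mul_of_one_le_of_one_le (by linarith [n.cast_nonneg (α := ℝ)]) one_le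
    have le_mul : A - 1 + w ≤ A * (1 + w) := by nlinarith
    calc A - 1 + Fintype.card (LocalTerm (Fin (n + 1))) * (((p : ℕ) : ℝ)⁻¹ ^ 2 * (A - 1 + w))
        ≤ A - 1 + Fintype.card (LocalTerm (Fin (n + 1))) *
            (((p : ℕ) : ℝ)⁻¹ ^ 2 * (A * (1 + w))) := by gcongr
      _ = (n + 2) * ((1 + errorFactor α β p) * ∏ q ∈ S, (1 + errorFactor α β q)) - 1 := by
        rw [errorFactor]
        ring

theorem eventually_inter_squarefreeAt {s : Set (Fin n → ℕ)} (hs : s.Finite)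
    (hs₀ : ∀ a ∈ s, ∀ j, 0 < a j) :
    ∀ᶠ S : Finset Nat.Primes in atTop, s ∩ squarefreeAt S = s ∩ {a | Squarefree (∏ j, a j)} := by
  have eventually_iff (a : Fin n → ℕ) (ha : a ∈ s) :
      ∀ᶠ S : Finset Nat.Primes in atTop, a ∈ squarefreeAt S ↔ Squarefree (∏ j, a j) := by
    filter_upwards [eventually_ge_atTop ((∏ j, a j).primeFactors.subtype Nat.Prime)] with S hS
    rw [Nat.squarefree_iff_prime_squarefree]
    refine ⟨fun haS p hp hpa => haS ⟨p, hp⟩ (hS ?_) (by rwa [sq]),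
      fun h p _ hpa => h p p.2 (by rwa [← sq])⟩
    exact Finset.mem_subtype.2 (Nat.mem_primeFactors.2 ⟨hp, (dvd_mul_right p p).trans hpa,
      Finset.prod_ne_zero_iff.2 fun j _ => (hs₀ a ha j).ne'⟩)
  filter_upwards [(eventually_all_finite hs).2 eventually_iff] with S hS
  ext a
  exact and_congr_right (hS a)

theorem approxCutVolume_harmonicSum_squarefree (hα : 1 ≤ α) (hβ : 1 ≤ β)
    (hP : HasProd (fun p : Nat.Primes => squarefreeFactor (n + 1) ((p : ℕ) : ℝ)⁻¹) P) :
    ∃ E, ApproxCutVolume α β P E fun x y =>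
      harmonicSum (admissible α β x y ∩ {a | Squarefree (∏ j, a j)}) := by
  have hasProd_errorFactor :=
    (Real.multipliable_one_add_of_summable (summable_errorFactor α β)).hasProd
  refine ⟨(n + 2) * ∏' p : Nat.Primes, (1 + errorFactor α β p) - 1, fun L x y hL hx => ?_⟩
  have sum_eventuallyEq : (fun S => harmonicSum (admissible α β x y ∩ squarefreeAt S)) =ᶠ[atTop]
      fun _ => harmonicSum (admissible α β x y ∩ {a | Squarefree (∏ j, a j)}) :=
    (eventually_inter_squarefreeAt (finite_admissible hα) fun a ha => ha.1).mono
      fun S hS => congrArg harmonicSum hS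
  exact le_of_tendsto_of_tendsto'
    ((tendsto_const_nhds.congr' sum_eventuallyEq.symm).sub (hP.mul_const _)).abs
    (((hasProd_errorFactor.const_mul _).sub_const _).mul_const _)
    fun S => approxCutVolume_harmonicSum_squarefreeAt hα hβ S hL hx

end Approximation

section GradedProduct

variable {N : ℕ} {a b : Fin N → ℕ}

/-- The product `a₁ a₂² ⋯ a_N ^ N`. Every positive integer is uniquely an `(N + 1)`-th power times
such a product with `a₁ ⋯ a_N` squarefree. -/
def gradedProd (a : Fin N → ℕ) : ℕ := ∏ j, a j ^ ((j : ℕ) + 1)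

theorem gradedProd_pos (ha : ∀ j, 0 < a j) : 0 < gradedProd a :=
  Finset.prod_pos fun j _ => pow_pos (ha j) _

theorem apply_le_gradedProd (ha : ∀ j, 0 < a j) (j : Fin N) : a j ≤ gradedProd a :=
  (Nat.le_self_pow (Nat.succ_ne_zero _) _).trans
    (Nat.le_of_dvd (gradedProd_pos ha) (Finset.dvd_prod_of_mem _ (Finset.mem_univ j)))

theorem gradedProd_comp_rev (a : Fin N → ℕ) :
    gradedProd (a ∘ Fin.rev) = ∏ j, a j ^ (N - (j : ℕ)) := by
  rw [gradedProd, ← Equiv.prod_comp Fin.revPerm]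
  refine Finset.prod_congr rfl fun j _ => ?_
  have exponent_eq : N - (j + 1) + 1 = N - (j : ℕ) := by omega
  simp only [Fin.revPerm_apply, Function.comp_apply, Fin.rev_rev, Fin.val_rev, exponent_eq]

theorem gradedProd_mul_gradedProd_comp_rev (a : Fin N → ℕ) :
    gradedProd a * gradedProd (a ∘ Fin.rev) = (∏ j, a j) ^ (N + 1) := by
  rw [gradedProd_comp_rev, gradedProd, ← Finset.prod_mul_distrib, ← Finset.prod_pow]
  refine Finset.prod_congr rfl fun j _ => ?_
  rw [← pow_add]
  congr 1
  omega

theorem pos_of_squarefree_prod (ha : Squarefree (∏ j, a j)) (j : Fin N) : 0 < a j :=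
  Nat.pos_of_ne_zero (Finset.prod_ne_zero_iff.1 ha.ne_zero j (Finset.mem_univ j))

theorem squarefree_prod_comp_rev : Squarefree (∏ j, (a ∘ Fin.rev) j) ↔ Squarefree (∏ j, a j) := by
  rw [← Equiv.prod_comp Fin.revPerm a]
  rfl

theorem factorization_gradedProd (ha : ∀ j, 0 < a j) (p : ℕ) :
    (gradedProd a).factorization p = ∑ j : Fin N, ((j : ℕ) + 1) * (a j).factorization p := by
  rw [gradedProd, Nat.factorization_prod fun j _ => (pow_pos (ha j) _).ne', Finsupp.finsetSum_apply]
  simp only [Nat.factorization_pow, Finsupp.smul_apply, smul_eq_mul]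

theorem factorization_eq_zero_or_single (ha : Squarefree (∏ j, a j)) (p : ℕ) :
    (∀ j, (a j).factorization p = 0) ∨ ∃ l, (fun j => (a j).factorization p) = Pi.single l 1 := by
  have le_one := ha.natFactorization_le_one p
  rw [Nat.factorization_prod fun j _ => (pos_of_squarefree_prod ha j).ne',
    Finsupp.finsetSum_apply] at le_one
  rcases Nat.le_one_iff_eq_zero_or_eq_one.1 le_one with h | h
  · exact Or.inl fun j => Finset.sum_eq_zero_iff.1 h j (Finset.mem_univ j)
  · exact Or.inr (exists_eq_single_of_sum_eq_one h)

theorem factorization_mod_eq_iff_dvd (ha : Squarefree (∏ j, a j)) {u : ℕ} (hu : 0 < u) {p : ℕ}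
    (hp : p.Prime) (j : Fin N) :
    (u ^ (N + 1) * gradedProd a).factorization p % (N + 1) = j + 1 ↔ p ∣ a j := by
  have ha₀ := pos_of_squarefree_prod ha
  rw [Nat.factorization_mul (pow_pos hu _).ne' (gradedProd_pos ha₀).ne', Nat.factorization_pow,
    Finsupp.add_apply, Finsupp.smul_apply, smul_eq_mul, Nat.mul_add_mod,
    factorization_gradedProd ha₀, hp.dvd_iff_one_le_factorization (ha₀ j).ne']
  rcases factorization_eq_zero_or_single ha p with h | ⟨l, h⟩
  · simp [h]
  · have sum_eq : ∑ i : Fin N, ((i : ℕ) + 1) * (a i).factorization p = l + 1 := by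
      simp only [funext_iff.1 h, Pi.single_apply, mul_ite, mul_one, mul_zero,
        Finset.sum_ite_eq', Finset.mem_univ, if_true]
    rw [sum_eq, Nat.mod_eq_of_lt (Nat.succ_lt_succ l.2), congrFun h j, Pi.single_apply]
    split_ifs with hj
    · simp [hj]
    · simpa [Fin.ext_iff] using fun h => hj (Fin.ext h.symm)

theorem pow_mul_gradedProd_inj (ha : Squarefree (∏ j, a j)) (hb : Squarefree (∏ j, b j)) {u v : ℕ}
    (hu : 0 < u) (hv : 0 < v) (h : u ^ (N + 1) * gradedProd a = v ^ (N + 1) * gradedProd b) :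
    u = v ∧ a = b := by
  have squarefree_apply {c : Fin N → ℕ} (hc : Squarefree (∏ j, c j)) (j : Fin N) :
      Squarefree (c j) := hc.squarefree_of_dvd (Finset.dvd_prod_of_mem c (Finset.mem_univ j))
  obtain rfl : a = b := by
    ext j
    refine (Nat.Squarefree.ext_iff (squarefree_apply ha j) (squarefree_apply hb j)).2 fun p hp => ?_
    rw [← factorization_mod_eq_iff_dvd ha hu hp, ← factorization_mod_eq_iff_dvd hb hv hp, h]
  refine ⟨Nat.pow_left_injective N.succ_ne_zero ?_, rfl⟩
  exact Nat.eq_of_mul_eq_mul_right (gradedProd_pos (pos_of_squarefree_prod ha)) h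

theorem prod_ite_eq_succ {M : Type*} [CommMonoid M] {r : ℕ} (hr : r < N + 1) {f : ℕ → M}
    (hf : f 0 = 1) : ∏ j : Fin N, (if r = j + 1 then f (j + 1) else 1) = f r := by
  have prod_range : ∏ j ∈ Finset.range (N + 1), (if r = j then f j else 1) = f r := by
    rw [Finset.prod_ite_eq, if_pos (Finset.mem_range.2 hr)]
  rw [Finset.prod_range_succ', hf, ite_self, mul_one] at prod_range
  rw [← prod_range, Finset.prod_range]

theorem exists_pow_mul_gradedProd_eq (N : ℕ) {x : ℕ} (hx : 0 < x) :
    ∃ (u : ℕ) (a : Fin N → ℕ), 0 < u ∧ Squarefree (∏ j, a j) ∧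
      u ^ (N + 1) * gradedProd a = x := by
  set r : ℕ → ℕ := fun p => x.factorization p % (N + 1)
  have hr (p : ℕ) : r p < N + 1 := Nat.mod_lt _ N.succ_pos
  refine ⟨∏ p ∈ x.primeFactors, p ^ (x.factorization p / (N + 1)),
    fun j => ∏ p ∈ x.primeFactors, if r p = j + 1 then p else 1,
    Finset.prod_pos fun p hp => pow_pos (Nat.prime_of_mem_primeFactors hp).pos _, ?_, ?_⟩
  · have radical_squarefree : Squarefree (∏ p ∈ x.primeFactors, p) := by
      rw [← Nat.radical_eq_prod_primeFactors]
      exact UniqueFactorizationMonoid.squarefree_radical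
    rw [Finset.prod_comm]
    refine radical_squarefree.squarefree_of_dvd (Finset.prod_dvd_prod_of_dvd _ _ fun p _ => ?_)
    have := prod_ite_eq_succ (hr p) (f := fun i => if i = 0 then 1 else p) rfl
    simp only [Nat.succ_ne_zero, if_false] at this
    rw [this]
    split_ifs <;> simp
  · simp only [gradedProd, ← Finset.prod_pow, ite_pow, one_pow]
    rw [Finset.prod_comm, ← Finset.prod_mul_distrib]
    conv_rhs => rw [← Nat.prod_factorization_pow_eq_self hx.ne', Finsupp.prod,
      Nat.support_factorization]
    refine Finset.prod_congr rfl fun p _ => ?_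
    rw [prod_ite_eq_succ (hr p) (pow_zero p), ← pow_mul, ← pow_add, Nat.div_add_mod']

theorem exists_mul_eq_pow_iff {x y : ℕ} (hx : 0 < x) (hy : 0 < y) :
    (∃ m, 0 < m ∧ x * y = m ^ (N + 1)) ↔ ∃ (a : Fin N → ℕ) (u v : ℕ), Squarefree (∏ j, a j) ∧
      0 < u ∧ 0 < v ∧ u ^ (N + 1) * gradedProd a = x ∧
        v ^ (N + 1) * gradedProd (a ∘ Fin.rev) = y := by
  constructor
  · rintro ⟨m, hm, h⟩
    obtain ⟨u, a, hu, ha, rfl⟩ := exists_pow_mul_gradedProd_eq N hx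
    obtain ⟨v, b, hv, hb, rfl⟩ := exists_pow_mul_gradedProd_eq N hy
    have prod_pos : 0 < ∏ j, a j := Nat.pos_of_ne_zero ha.ne_zero
    -- Multiplying `h` by `gradedProd (a ∘ Fin.rev)` completes `gradedProd a` to a power.
    have pow_mul_eq : (u * v * ∏ j, a j) ^ (N + 1) * gradedProd b =
        m ^ (N + 1) * gradedProd (a ∘ Fin.rev) := by
      rw [← h, mul_pow, ← gradedProd_mul_gradedProd_comp_rev]
      ring
    obtain ⟨-, rfl⟩ := pow_mul_gradedProd_inj hb (squarefree_prod_comp_rev.2 ha) (by positivity) hm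
      pow_mul_eq
    exact ⟨a, u, v, ha, hu, hv, rfl, rfl⟩
  · rintro ⟨a, u, v, ha, hu, hv, rfl, rfl⟩
    refine ⟨u * v * ∏ j, a j, mul_pos (mul_pos hu hv) (Nat.pos_of_ne_zero ha.ne_zero), ?_⟩
    rw [mul_pow, ← gradedProd_mul_gradedProd_comp_rev]
    ring

end GradedProduct

section Counting

variable {N : ℕ} {H : ℝ}

theorem le_floor_div_rpow_iff (hH : 0 ≤ H) {k A : ℕ} (hk : k ≠ 0) (hA : 0 < A) (u : ℕ) :
    u ≤ ⌊(H / A) ^ (k : ℝ)⁻¹⌋₊ ↔ u ^ k * A ≤ ⌊H⌋₊ := by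
  rw [Nat.le_floor_iff (by positivity), Nat.le_floor_iff hH,
    Real.le_rpow_inv_iff_of_pos (by positivity) (by positivity) (by positivity), Real.rpow_natCast,
    le_div_iff₀ (by exact_mod_cast hA)]
  push_cast
  rfl

/-- The real number `(H / gradedProd a) ^ (1 / (N + 1))`, whose floor counts the `u > 0` with
`u ^ (N + 1) * gradedProd a ≤ H`. -/
noncomputable def gradedRoot (H : ℝ) (a : Fin N → ℕ) : ℝ :=
  (H / gradedProd a) ^ ((N + 1 : ℕ) : ℝ)⁻¹

theorem gradedRoot_nonneg (hH : 0 ≤ H) (a : Fin N → ℕ) : 0 ≤ gradedRoot H a := by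
  rw [gradedRoot]
  positivity

theorem le_floor_gradedRoot_iff (hH : 0 ≤ H) {a : Fin N → ℕ} (ha : ∀ j, 0 < a j) {u : ℕ} :
    u ≤ ⌊gradedRoot H a⌋₊ ↔ u ^ (N + 1) * gradedProd a ≤ ⌊H⌋₊ :=
  le_floor_div_rpow_iff hH N.succ_ne_zero (gradedProd_pos ha) u

/-- The pairs of positive integers up to `H` whose product is a `k`-th power. -/
noncomputable def powerPairs (k : ℕ) (H : ℝ) : Finset (ℕ × ℕ) :=
  (Finset.Icc 1 ⌊H⌋₊ ×ˢ Finset.Icc 1 ⌊H⌋₊).filter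
    fun p => ∃ m : ℕ, 0 < m ∧ p.1 * p.2 = m ^ k

/-- The squarefree parts `a` that can occur in the parametrization
`x₁ = u ^ (N + 1) * gradedProd a`, `x₂ = v ^ (N + 1) * gradedProd (a ∘ Fin.rev)` of the pairs up
to `H` whose product is an `(N + 1)`-th power. -/
noncomputable def squarefreeBox (N : ℕ) (H : ℝ) : Finset (Fin N → ℕ) :=
  (Finset.Icc 1 fun _ => ⌊H⌋₊).filter fun a => Squarefree (∏ j, a j)

theorem mem_squarefreeBox {a : Fin N → ℕ} :
    a ∈ squarefreeBox N H ↔ (∀ j, a j ≤ ⌊H⌋₊) ∧ Squarefree (∏ j, a j) := by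
  rw [squarefreeBox, Finset.mem_filter, Finset.mem_Icc]
  exact and_congr_left fun ha => and_iff_right (pos_of_squarefree_prod ha)

/-- The parameters `(a, u, v)` of the pairs `(u ^ (N + 1) * gradedProd a,
v ^ (N + 1) * gradedProd (a ∘ Fin.rev))` with both entries at most `H`. -/
noncomputable def pairParams (N : ℕ) (H : ℝ) : Finset ((_ : Fin N → ℕ) × ℕ × ℕ) :=
  (squarefreeBox N H).sigma fun a =>
    Finset.Icc 1 ⌊gradedRoot H a⌋₊ ×ˢ Finset.Icc 1 ⌊gradedRoot H (a ∘ Fin.rev)⌋₊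

theorem mem_pairParams (hH : 0 ≤ H) {a : Fin N → ℕ} {u v : ℕ} :
    ⟨a, u, v⟩ ∈ pairParams N H ↔ Squarefree (∏ j, a j) ∧ 0 < u ∧ 0 < v ∧
      u ^ (N + 1) * gradedProd a ≤ ⌊H⌋₊ ∧ v ^ (N + 1) * gradedProd (a ∘ Fin.rev) ≤ ⌊H⌋₊ := by
  by_cases ha : Squarefree (∏ j, a j)
  · have ha₀ := pos_of_squarefree_prod ha
    have hrev₀ : ∀ j, 0 < (a ∘ Fin.rev) j := fun j => ha₀ j.rev
    simp only [pairParams, Finset.mem_sigma, Finset.mem_product, Finset.mem_Icc, mem_squarefreeBox,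
      le_floor_gradedRoot_iff hH ha₀, le_floor_gradedRoot_iff hH hrev₀, ha, and_true, true_and]
    refine ⟨fun ⟨_, ⟨hu, hu'⟩, hv, hv'⟩ => ⟨hu, hv, hu', hv'⟩, fun ⟨hu, hv, hu', hv'⟩ =>
      ⟨fun j => ?_, ⟨hu, hu'⟩, hv, hv'⟩⟩
    exact (apply_le_gradedProd ha₀ j).trans ((Nat.le_mul_of_pos_left _ (pow_pos hu _)).trans hu')
  · simp [pairParams, mem_squarefreeBox, ha]

theorem card_powerPairs_eq_card_pairParams (N : ℕ) (hH : 0 ≤ H) :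
    (powerPairs (N + 1) H).card = (pairParams N H).card := by
  symm
  refine Finset.card_bij (fun t _ => (t.2.1 ^ (N + 1) * gradedProd t.1,
    t.2.2 ^ (N + 1) * gradedProd (t.1 ∘ Fin.rev))) ?_ ?_ ?_
  · rintro ⟨a, u, v⟩ h
    obtain ⟨ha, hu, hv, hx, hy⟩ := (mem_pairParams hH).1 h
    have ha₀ := pos_of_squarefree_prod ha
    have hx₀ := Nat.mul_pos (pow_pos hu (N + 1)) (gradedProd_pos ha₀)
    have hy₀ := Nat.mul_pos (pow_pos hv (N + 1)) (gradedProd_pos (a := a ∘ Fin.rev) fun j => ha₀ _)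
    simp only [powerPairs, Finset.mem_filter, Finset.mem_product, Finset.mem_Icc]
    exact ⟨⟨⟨hx₀, hx⟩, hy₀, hy⟩, (exists_mul_eq_pow_iff hx₀ hy₀).2 ⟨a, u, v, ha, hu, hv, rfl, rfl⟩⟩
  · rintro ⟨a, u, v⟩ h ⟨b, u', v'⟩ h' heq
    obtain ⟨ha, hu, hv, -⟩ := (mem_pairParams hH).1 h
    obtain ⟨hb, hu', hv', -⟩ := (mem_pairParams hH).1 h'
    obtain ⟨rfl, rfl⟩ := pow_mul_gradedProd_inj ha hb hu hu' (Prod.mk.inj heq).1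
    have ha' := squarefree_prod_comp_rev.2 ha
    obtain ⟨rfl, -⟩ := pow_mul_gradedProd_inj ha' ha' hv hv' (Prod.mk.inj heq).2
    rfl
  · rintro ⟨x, y⟩ h
    simp only [powerPairs, Finset.mem_filter, Finset.mem_product, Finset.mem_Icc] at h
    obtain ⟨⟨⟨hx₀, hx⟩, hy₀, hy⟩, hxy⟩ := h
    obtain ⟨a, u, v, ha, hu, hv, rfl, rfl⟩ := (exists_mul_eq_pow_iff hx₀ hy₀).1 hxy
    exact ⟨⟨a, u, v⟩, (mem_pairParams hH).2 ⟨ha, hu, hv, hx, hy⟩, rfl⟩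

theorem card_powerPairs_eq_sum (N : ℕ) (hH : 0 ≤ H) :
    (powerPairs (N + 1) H).card =
    ∑ a ∈ squarefreeBox N H, ⌊gradedRoot H a⌋₊ * ⌊gradedRoot H (a ∘ Fin.rev)⌋₊ := by
  rw [card_powerPairs_eq_card_pairParams N hH]
  simp only [pairParams, Finset.card_sigma, Finset.card_product, Nat.card_Icc, Nat.add_sub_cancel]

end Counting

section RootSums

variable {H : ℝ}

theorem natCast_rpow_add_le {p : ℝ} (hp₀ : 0 ≤ p) (hp₁ : p ≤ 1) (m : ℕ) :
    (m : ℝ) ^ p + p * ((m + 1 : ℕ) : ℝ) ^ (p - 1) ≤ ((m + 1 : ℕ) : ℝ) ^ p := by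
  set b : ℝ := ((m + 1 : ℕ) : ℝ)
  have hb : 0 < b := by positivity
  have inv_le : b⁻¹ ≤ 1 := inv_le_one_of_one_le₀ (by simp [b])
  have hm : (m : ℝ) = b * (1 + -b⁻¹) := by
    rw [mul_add, mul_neg, mul_inv_cancel₀ hb.ne']
    simp [b]
  have bernoulli : (1 + -b⁻¹) ^ p ≤ 1 + p * -b⁻¹ :=
    rpow_one_add_le_one_add_mul_self (by linarith) hp₀ hp₁
  calc (m : ℝ) ^ p + p * b ^ (p - 1)
      = b ^ p * (1 + -b⁻¹) ^ p + b ^ p * (p * b⁻¹) := by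
        rw [hm, Real.mul_rpow hb.le (by linarith), Real.rpow_sub_one hb.ne']
        ring
    _ ≤ b ^ p * (1 + p * -b⁻¹) + b ^ p * (p * b⁻¹) := by gcongr
    _ = b ^ p := by ring

theorem mul_sum_rpow_sub_one_le {p : ℝ} (hp₀ : 0 ≤ p) (hp₁ : p ≤ 1) (m : ℕ) :
    p * ∑ b ∈ Finset.Icc 1 m, (b : ℝ) ^ (p - 1) ≤ (m : ℝ) ^ p := by
  induction m with
  | zero => simpa using Real.rpow_nonneg le_rfl p
  | succ m ih =>
    rw [Finset.sum_Icc_succ_top (by omega), mul_add]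
    exact (add_le_add_left ih _).trans (natCast_rpow_add_le hp₀ hp₁ m)

theorem sum_Icc_floor_rpow_sub_one_le {p X : ℝ} (hp₀ : 1 / 2 ≤ p) (hp₁ : p ≤ 1) (hX : 0 ≤ X) :
    ∑ b ∈ Finset.Icc 1 ⌊X⌋₊, (b : ℝ) ^ (p - 1) ≤ 2 * X ^ p := by
  have sum_nonneg : 0 ≤ ∑ b ∈ Finset.Icc 1 ⌊X⌋₊, (b : ℝ) ^ (p - 1) :=
    Finset.sum_nonneg fun b _ => by positivity
  have mul_sum_le := mul_sum_rpow_sub_one_le (by linarith) hp₁ ⌊X⌋₊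
  have floor_rpow_le : (⌊X⌋₊ : ℝ) ^ p ≤ X ^ p :=
    Real.rpow_le_rpow (by positivity) (Nat.floor_le hX) (by linarith)
  nlinarith

theorem div_rpow_mul_div_rpow {k A B r : ℕ} (hH : 0 ≤ H) (hk : k ≠ 0) (h : A * B = r ^ k) :
    (H / A) ^ (k : ℝ)⁻¹ * (H / B) ^ (k : ℝ)⁻¹ = H ^ (2 / (k : ℝ)) * (r : ℝ)⁻¹ := by
  rw [← Real.mul_rpow (by positivity) (by positivity), div_mul_div_comm, ← Nat.cast_mul, h,
    Nat.cast_pow, Real.div_rpow (by positivity) (by positivity),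
    Real.pow_rpow_inv_natCast (by positivity) hk, ← sq, ← Real.rpow_natCast, ← Real.rpow_mul hH]
  simp [div_eq_mul_inv]

theorem sum_Icc_div_rpow_le (hH : 0 ≤ H) (n M A : ℕ) {B : ℕ} (hB : 0 < B) :
    ∑ b ∈ Finset.Icc 1 M, (if b ^ (n + 1) * B ≤ ⌊H⌋₊ then
      (H / (b * A : ℕ)) ^ ((n + 2 : ℕ) : ℝ)⁻¹ else 0) ≤
    2 * ((H / A) ^ ((n + 2 : ℕ) : ℝ)⁻¹ * (H / B) ^ ((n + 2 : ℕ) : ℝ)⁻¹) := by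
  set θ : ℝ := ((n + 2 : ℕ) : ℝ)⁻¹ with hθ
  have θ_pos : 0 < θ := by positivity
  have θ_le : θ ≤ 1 / 2 := by
    rw [hθ, ← one_div]
    exact one_div_le_one_div_of_le two_pos (by push_cast; linarith [n.cast_nonneg (α := ℝ)])
  set X : ℝ := (H / B) ^ ((n + 1 : ℕ) : ℝ)⁻¹ with hX
  have X_rpow : X ^ (1 - θ) = (H / B) ^ θ := by
    rw [hX, ← Real.rpow_mul (by positivity), hθ]
    congr 1
    push_cast
    field_simp
    ring
  have subset : (Finset.Icc 1 M).filter (fun b => b ^ (n + 1) * B ≤ ⌊H⌋₊) ⊆ Finset.Icc 1 ⌊X⌋₊ := by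
    intro b hb
    rw [Finset.mem_filter, ← le_floor_div_rpow_iff hH n.succ_ne_zero hB, Finset.mem_Icc] at hb
    exact Finset.mem_Icc.2 ⟨hb.1.1, hb.2⟩
  have split (b : ℕ) : (H / (b * A : ℕ)) ^ θ = (H / A) ^ θ * (b : ℝ) ^ ((1 - θ) - 1) := by
    rw [sub_sub_cancel_left, Real.rpow_neg (by positivity), ← Real.inv_rpow (by positivity),
      ← Real.mul_rpow (by positivity) (by positivity), ← div_eq_mul_inv, div_div, Nat.cast_mul,
      mul_comm (b : ℝ)]
  calc _ ≤ ∑ b ∈ Finset.Icc 1 ⌊X⌋₊, (H / (b * A : ℕ)) ^ θ := by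
        rw [← Finset.sum_filter]
        exact Finset.sum_le_sum_of_subset_of_nonneg subset fun b _ _ => by positivity
    _ ≤ (H / A) ^ θ * (2 * (H / B) ^ θ) := by
        simp only [split, ← Finset.mul_sum]
        gcongr
        exact (sum_Icc_floor_rpow_sub_one_le (by linarith) (by linarith) (by positivity)).trans_eq
          (by rw [X_rpow])
    _ = 2 * ((H / A) ^ θ * (H / B) ^ θ) := by ring

end RootSums

section ErrorSum

variable {n : ℕ} {H : ℝ}

theorem gradedProd_cons (b : ℕ) (a : Fin n → ℕ) :
    gradedProd (Fin.cons b a : Fin (n + 1) → ℕ) = b * (gradedProd a * ∏ j, a j) := by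
  simp only [gradedProd, Fin.prod_univ_succ, Fin.cons_zero, Fin.cons_succ, Fin.val_zero,
    Fin.val_succ, zero_add, pow_one, pow_succ _ (_ + 1), Finset.prod_mul_distrib]

theorem gradedProd_cons_comp_rev (b : ℕ) (a : Fin n → ℕ) :
    gradedProd ((Fin.cons b a : Fin (n + 1) → ℕ) ∘ Fin.rev) =
      b ^ (n + 1) * gradedProd (a ∘ Fin.rev) := by
  simp only [gradedProd_comp_rev, Fin.prod_univ_succ, Fin.cons_zero, Fin.cons_succ, Fin.val_zero,
    Fin.val_succ, Nat.sub_zero, Nat.add_sub_add_right]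

theorem sum_Icc_fin_succ (M : ℕ) (f : (Fin (n + 1) → ℕ) → ℝ) :
    ∑ a ∈ Finset.Icc 1 (fun _ => M), f a =
      ∑ a ∈ Finset.Icc (1 : Fin n → ℕ) (fun _ => M), ∑ b ∈ Finset.Icc 1 M, f (Fin.cons b a) := by
  rw [Finset.sum_comm, ← Finset.sum_product']
  symm
  refine Finset.sum_equiv (Fin.consEquiv fun _ => ℕ) (fun p => ?_) fun p _ => rfl
  simp only [Finset.mem_product, Finset.mem_Icc, Pi.le_def, Fin.forall_fin_succ,
    Fin.consEquiv_apply, Fin.cons_zero, Fin.cons_succ, Pi.one_apply]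
  tauto

theorem sum_Icc_comp_rev (M : ℕ) (f : (Fin n → ℕ) → ℝ) :
    ∑ a ∈ Finset.Icc 1 (fun _ => M), f (a ∘ Fin.rev) = ∑ a ∈ Finset.Icc 1 (fun _ => M), f a := by
  refine Finset.sum_equiv (Fin.revPerm.arrowCongr (Equiv.refl ℕ)) (fun a => ?_) fun a _ => rfl
  simp only [Finset.mem_Icc, Pi.le_def]
  refine and_congr ?_ ?_ <;> exact Fin.revPerm.forall_congr_left

theorem gradedRoot_mul_gradedRoot_comp_rev (hH : 0 ≤ H) (a : Fin n → ℕ) :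
    gradedRoot H a * gradedRoot H (a ∘ Fin.rev) =
      H ^ (2 / ((n + 1 : ℕ) : ℝ)) * ∏ j, (a j : ℝ)⁻¹ := by
  rw [gradedRoot, gradedRoot, div_rpow_mul_div_rpow hH n.succ_ne_zero
    (gradedProd_mul_gradedProd_comp_rev a), Nat.cast_prod, Finset.prod_inv_distrib]

/-- The error made by replacing `⌊gradedRoot H (a ∘ Fin.rev)⌋₊` by its argument in the number
`⌊gradedRoot H a⌋₊ * ⌊gradedRoot H (a ∘ Fin.rev)⌋₊` of pairs belonging to `a`. -/
noncomputable def rootError (H : ℝ) (a : Fin n → ℕ) : ℝ :=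
  if gradedProd (a ∘ Fin.rev) ≤ ⌊H⌋₊ then gradedRoot H a else 0

theorem rootError_nonneg (hH : 0 ≤ H) (a : Fin n → ℕ) : 0 ≤ rootError H a :=
  ite_nonneg (gradedRoot_nonneg hH a) le_rfl

theorem sum_rootError_le (hH : 0 ≤ H) (M : ℕ) :
    ∑ a ∈ Finset.Icc (1 : Fin (n + 1) → ℕ) (fun _ => M), rootError H a ≤
      2 * H ^ (2 / ((n + 2 : ℕ) : ℝ)) * (∑ b ∈ Finset.Icc 1 M, (b : ℝ)⁻¹) ^ n := by
  rw [sum_Icc_fin_succ, Finset.sum_pow', Finset.mul_sum]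
  refine Finset.sum_le_sum fun a ha => ?_
  simp only [rootError, gradedRoot, gradedProd_cons, gradedProd_cons_comp_rev]
  have hrev₀ : 0 < gradedProd (a ∘ Fin.rev) := gradedProd_pos fun j => (Finset.mem_Icc.1 ha).1 j.rev
  have mul_eq : (gradedProd a * ∏ j, a j) * gradedProd (a ∘ Fin.rev) = (∏ j, a j) ^ (n + 2) := by
    rw [mul_right_comm, gradedProd_mul_gradedProd_comp_rev, ← pow_succ]
  refine (sum_Icc_div_rpow_le hH n M _ hrev₀).trans_eq ?_
  rw [div_rpow_mul_div_rpow hH (by omega) mul_eq, Nat.cast_prod, Finset.prod_inv_distrib, mul_assoc]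

end ErrorSum

section MainEstimate

variable {n : ℕ} {H : ℝ}

/-- The sum of `1 / (a₁ ⋯ a_N)` over the tuples with `a₁ ⋯ a_N` squarefree and both `gradedProd a`
and `gradedProd (a ∘ Fin.rev)` at most `H`, which governs the number of pairs in
`powerPairs (N + 1) H`. -/
noncomputable def gradedHarmonicSum (N : ℕ) (H : ℝ) : ℝ :=
  ∑ a ∈ squarefreeBox N H,
    if gradedProd a ≤ ⌊H⌋₊ ∧ gradedProd (a ∘ Fin.rev) ≤ ⌊H⌋₊ then ∏ j, (a j : ℝ)⁻¹ else 0

theorem dotProduct_logVec {a : Fin n → ℕ} (ha : ∀ j, 0 < a j) (e : Fin n → ℕ) :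
    (fun j => (e j : ℝ)) ⬝ᵥ logVec a = Real.log (∏ j, a j ^ e j : ℕ) := by
  rw [Nat.cast_prod, Real.log_prod fun j _ => by have := ha j; positivity]
  simp only [dotProduct, logVec, Nat.cast_pow, Real.log_pow]

theorem dotProduct_logVec_le_log_iff (hH : 0 < H) {a : Fin n → ℕ} (ha : ∀ j, 0 < a j)
    (e : Fin n → ℕ) :
    (fun j => (e j : ℝ)) ⬝ᵥ logVec a ≤ Real.log H ↔ ∏ j, a j ^ e j ≤ ⌊H⌋₊ := by
  have prod_pos : 0 < ∏ j, a j ^ e j := Finset.prod_pos fun j _ => pow_pos (ha j) _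
  rw [dotProduct_logVec ha, Real.log_le_log_iff (by exact_mod_cast prod_pos) hH,
    Nat.le_floor_iff hH.le]

theorem mem_admissible_log_iff (hH : 0 < H) {a : Fin n → ℕ} :
    a ∈ admissible (fun j => ((j : ℕ) : ℝ) + 1) (fun j => ((n + 1 : ℕ) : ℝ) - ((j : ℕ) + 1))
      (Real.log H) (Real.log H) ↔
    (∀ j, 0 < a j) ∧ gradedProd a ≤ ⌊H⌋₊ ∧ gradedProd (a ∘ Fin.rev) ≤ ⌊H⌋₊ := by
  have cast_rev (j : Fin n) : ((n + 1 : ℕ) : ℝ) - ((j : ℕ) + 1) = (n - (j : ℕ) : ℕ) := by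
    rw [Nat.cast_sub j.2.le]
    push_cast
    ring
  rw [mem_admissible]
  refine and_congr_right fun ha => and_congr ?_ ?_
  · exact_mod_cast dotProduct_logVec_le_log_iff hH ha fun j => (j : ℕ) + 1
  · simp only [gradedProd_comp_rev, cast_rev]
    exact dotProduct_logVec_le_log_iff hH ha fun j => n - (j : ℕ)

theorem harmonicSum_admissible_inter_squarefree (hH : 0 < H) :
    harmonicSum (admissible (fun j : Fin n => ((j : ℕ) : ℝ) + 1)
      (fun j => ((n + 1 : ℕ) : ℝ) - ((j : ℕ) + 1)) (Real.log H) (Real.log H) ∩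
      {a | Squarefree (∏ j, a j)}) = gradedHarmonicSum n H := by
  rw [gradedHarmonicSum, ← Finset.sum_filter, ← harmonicSum_coe]
  congr 1
  ext a
  simp only [Set.mem_inter_iff, Set.mem_ofPred_eq, mem_admissible_log_iff hH, Finset.coe_filter,
    mem_squarefreeBox]
  constructor
  · rintro ⟨⟨ha₀, hle, hle'⟩, ha⟩
    exact ⟨⟨fun j => (apply_le_gradedProd ha₀ j).trans hle, ha⟩, hle, hle'⟩
  · rintro ⟨⟨-, ha⟩, hle⟩
    exact ⟨⟨pos_of_squarefree_prod ha, hle⟩, ha⟩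

theorem exists_abs_gradedHarmonicSum_sub_le {P : ℝ}
    (hP : HasProd (fun p : Nat.Primes => squarefreeFactor (n + 1) ((p : ℕ) : ℝ)⁻¹) P) :
    ∃ E, ∀ H, 1 ≤ H → |gradedHarmonicSum (n + 1) H -
      P * (diagonalCoeff (n + 2) * Real.log H ^ (n + 1))| ≤ E * (1 + Real.log H) ^ n := by
  have hα : 1 ≤ fun j : Fin (n + 1) => ((j : ℕ) : ℝ) + 1 := fun j => by simp
  have hβ : 1 ≤ fun j : Fin (n + 1) => ((n + 1 + 1 : ℕ) : ℝ) - ((j : ℕ) + 1) := fun j => by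
    have : ((j : ℕ) : ℝ) + 1 ≤ (n + 1 : ℕ) := by exact_mod_cast j.2
    simp only [Pi.one_apply]
    push_cast at this ⊢
    linarith
  obtain ⟨E, hE⟩ := approxCutVolume_harmonicSum_squarefree hα hβ hP
  refine ⟨E, fun H hH => ?_⟩
  rw [← harmonicSum_admissible_inter_squarefree (by linarith),
    ← cutVolume_diagonal n (Real.log_nonneg hH)]
  exact hE (Real.log_nonneg hH) le_rfl

theorem abs_floor_mul_floor_sub_ite_le {x y : ℝ} (hx : 0 ≤ x) (hy : 0 ≤ y) :
    |(⌊x⌋₊ * ⌊y⌋₊ : ℝ) - if 1 ≤ ⌊x⌋₊ ∧ 1 ≤ ⌊y⌋₊ then x * y else 0| ≤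
      (if 1 ≤ ⌊y⌋₊ then x else 0) + if 1 ≤ ⌊x⌋₊ then y else 0 := by
  rcases Nat.eq_zero_or_pos ⌊x⌋₊ with hx₀ | hx₀
  · simp only [hx₀]
    split_ifs <;> simp_all
  rcases Nat.eq_zero_or_pos ⌊y⌋₊ with hy₀ | hy₀
  · simp only [hy₀]
    split_ifs <;> simp_all
  rw [if_pos ⟨hx₀, hy₀⟩, if_pos (Nat.succ_le_of_lt hy₀), if_pos (Nat.succ_le_of_lt hx₀), abs_le]
  have := Nat.floor_le hx
  have := Nat.floor_le hy
  have := Nat.lt_floor_add_one x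
  have := Nat.lt_floor_add_one y
  constructor <;> nlinarith

theorem abs_floor_gradedRoot_mul_sub_le (hH : 0 ≤ H) {a : Fin n → ℕ} (ha : ∀ j, 0 < a j) :
    |(⌊gradedRoot H a⌋₊ * ⌊gradedRoot H (a ∘ Fin.rev)⌋₊ : ℝ) - H ^ (2 / ((n + 1 : ℕ) : ℝ)) *
      (if gradedProd a ≤ ⌊H⌋₊ ∧ gradedProd (a ∘ Fin.rev) ≤ ⌊H⌋₊ then ∏ j, (a j : ℝ)⁻¹ else 0)| ≤
    rootError H a + rootError H (a ∘ Fin.rev) := by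
  have one_le_floor_iff {b : Fin n → ℕ} (hb : ∀ j, 0 < b j) :
      1 ≤ ⌊gradedRoot H b⌋₊ ↔ gradedProd b ≤ ⌊H⌋₊ := by
    rw [le_floor_gradedRoot_iff hH hb, one_pow, one_mul]
  have bound := abs_floor_mul_floor_sub_ite_le (gradedRoot_nonneg hH a)
    (gradedRoot_nonneg hH (a ∘ Fin.rev))
  simpa only [one_le_floor_iff ha, one_le_floor_iff (b := a ∘ Fin.rev) fun j => ha j.rev,
    gradedRoot_mul_gradedRoot_comp_rev hH, mul_ite, mul_zero, rootError, Function.comp_assoc,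
    Fin.rev_involutive.comp_self, Function.comp_id] using bound

theorem abs_card_powerPairs_sub_le (n : ℕ) (hH : 1 ≤ H) :
    |((powerPairs (n + 2) H).card : ℝ) -
      H ^ (2 / ((n + 2 : ℕ) : ℝ)) * gradedHarmonicSum (n + 1) H| ≤
    4 * H ^ (2 / ((n + 2 : ℕ) : ℝ)) * (1 + Real.log H) ^ n := by
  have hH₀ : 0 ≤ H := by linarith
  have sum_error_le : ∑ a ∈ Finset.Icc (1 : Fin (n + 1) → ℕ) (fun _ => ⌊H⌋₊), rootError H a ≤
      2 * H ^ (2 / ((n + 2 : ℕ) : ℝ)) * (1 + Real.log H) ^ n := by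
    refine (sum_rootError_le hH₀ ⌊H⌋₊).trans ?_
    gcongr
    exact sum_Icc_inv_le ((Nat.floor_le hH₀).trans_eq (Real.exp_log (by linarith)).symm)
      (Real.log_nonneg hH)
  calc _ ≤ ∑ a ∈ squarefreeBox (n + 1) H, (rootError H a + rootError H (a ∘ Fin.rev)) := by
        rw [card_powerPairs_eq_sum (n + 1) hH₀, gradedHarmonicSum, Finset.mul_sum, Nat.cast_sum,
          ← Finset.sum_sub_distrib]
        refine (Finset.abs_sum_le_sum_abs _ _).trans (Finset.sum_le_sum fun a ha => ?_)
        rw [Nat.cast_mul]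
        exact abs_floor_gradedRoot_mul_sub_le hH₀
          (pos_of_squarefree_prod (mem_squarefreeBox.1 ha).2)
    _ ≤ ∑ a ∈ Finset.Icc 1 (fun _ => ⌊H⌋₊), (rootError H a + rootError H (a ∘ Fin.rev)) :=
        Finset.sum_le_sum_of_subset_of_nonneg (Finset.filter_subset _ _) fun a _ _ =>
          add_nonneg (rootError_nonneg hH₀ _) (rootError_nonneg hH₀ _)
    _ ≤ 4 * H ^ (2 / ((n + 2 : ℕ) : ℝ)) * (1 + Real.log H) ^ n := by
        rw [Finset.sum_add_distrib, sum_Icc_comp_rev]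
        linarith

theorem exists_abs_card_powerPairs_sub_le {P : ℝ}
    (hP : HasProd (fun p : Nat.Primes => squarefreeFactor (n + 1) ((p : ℕ) : ℝ)⁻¹) P) :
    ∃ C, ∀ H, 1 ≤ H → |((powerPairs (n + 2) H).card : ℝ) -
      P * diagonalCoeff (n + 2) * H ^ (2 / ((n + 2 : ℕ) : ℝ)) * Real.log H ^ (n + 1)| ≤
      C * (H ^ (2 / ((n + 2 : ℕ) : ℝ)) * (1 + Real.log H) ^ n) := by
  obtain ⟨E, hE⟩ := exists_abs_gradedHarmonicSum_sub_le hP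
  refine ⟨4 + E, fun H hH => ?_⟩
  set W : ℝ := H ^ (2 / ((n + 2 : ℕ) : ℝ))
  have hW₀ : 0 ≤ W := by positivity
  set T := gradedHarmonicSum (n + 1) H
  calc _ = |(((powerPairs (n + 2) H).card : ℝ) - W * T) +
          W * (T - P * (diagonalCoeff (n + 2) * Real.log H ^ (n + 1)))| := by congr 1; ring
    _ ≤ 4 * W * (1 + Real.log H) ^ n + W * (E * (1 + Real.log H) ^ n) := by
        refine (abs_add_le _ _).trans (add_le_add (abs_card_powerPairs_sub_le n hH) ?_)
        rw [abs_mul, abs_of_nonneg hW₀]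
        exact mul_le_mul_of_nonneg_left (hE H hH) hW₀
    _ = (4 + E) * (W * (1 + Real.log H) ^ n) := by ring

theorem isBigO_one_add_log_pow (n : ℕ) :
    (fun H => (1 + Real.log H) ^ n) =O[atTop] fun H => Real.log H ^ n :=
  ((Real.isLittleO_const_log_atTop (c := 1)).isBigO.add (Asymptotics.isBigO_refl _ _)).pow n

theorem isBigO_card_powerPairs_sub {P : ℝ}
    (hP : HasProd (fun p : Nat.Primes => squarefreeFactor (n + 1) ((p : ℕ) : ℝ)⁻¹) P) :
    (fun H => ((powerPairs (n + 2) H).card : ℝ) -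
      P * diagonalCoeff (n + 2) * H ^ (2 / ((n + 2 : ℕ) : ℝ)) * Real.log H ^ (n + 1)) =O[atTop]
      fun H => H ^ (2 / ((n + 2 : ℕ) : ℝ)) * Real.log H ^ n := by
  obtain ⟨C, hC⟩ := exists_abs_card_powerPairs_sub_le hP
  refine .trans (.of_bound C ?_)
    ((Asymptotics.isBigO_refl _ atTop).mul (isBigO_one_add_log_pow n))
  filter_upwards [eventually_ge_atTop 1] with H hH
  have log_nonneg := Real.log_nonneg hH
  rw [Real.norm_eq_abs, Real.norm_of_nonneg (by positivity)]
  exact hC H hH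

end MainEstimate

end PowerProduct

theorem Sk_asymptotic (k : ℕ) (hk : 2 ≤ k) :
    ∃ Pk : ℝ,
      HasProd (fun p : Nat.Primes =>
        (1 - 1 / ((p : ℕ) : ℝ)) ^ (k - 1) * (1 + ((k : ℝ) - 1) / ((p : ℕ) : ℝ))) Pk ∧
      (fun H : ℝ =>
          (((Finset.Icc 1 ⌊H⌋₊ ×ˢ Finset.Icc 1 ⌊H⌋₊).filter
              (fun p : ℕ × ℕ => ∃ m : ℕ, 0 < m ∧ p.1 * p.2 = m ^ k)).card : ℝ)
            - (Pk / (Nat.factorial (k - 1) : ℝ) ^ 2) *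
                (1 + (1 / (k : ℝ) ^ (k - 2)) *
                  ∑ m ∈ Finset.Ioc (k / 2) (k - 1),
                    (-1 : ℝ) ^ (k - m) * (2 * (m : ℝ) - k) ^ (k - 1) *
                      ((k - 1).choose m) / ((k : ℝ) - m)) *
              H ^ (2 / (k : ℝ)) * (Real.log H) ^ (k - 1))
        =O[atTop] fun H : ℝ => H ^ (2 / (k : ℝ)) * (Real.log H) ^ (k - 2) := by
  obtain ⟨n, rfl⟩ : ∃ n, k = n + 2 := ⟨k - 2, by omega⟩
  have hP := (PowerProduct.multipliable_squarefreeFactor (n + 1)).hasProd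
  refine ⟨_, hP.congr_fun fun p => ?_, ?_⟩
  · simp only [PowerProduct.squarefreeFactor, div_eq_mul_inv]
    push_cast
    ring
  · refine (PowerProduct.isBigO_card_powerPairs_sub hP).congr_left fun H => ?_
    simp only [PowerProduct.powerPairs, PowerProduct.diagonalCoeff, Nat.add_succ_sub_one]
    ring
end
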